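/- Let n ≥ 1, 1 ≤ k ≤ n−1, and let U be an open subset of ℝⁿ that is star-shaped about one of its points. Every divergence-free antisymmetric k-tensor field F on U has a closed potential: there exists an antisymmetric (k+1)-tensor field B on U with F = δB on U and dB = 0 on U. (Strong dual Poincaré lemma: divergence-free fields locally have curl-free antiderivatives.) -/

import Mathlib

/-!
The proof turns a potential into a closed one by Hodge theory with the flat Laplacian.

`dual_poincare` gives some antisymmetric potential `B₀` of the divergence-free field `F` by the
homotopy formula `B₀(x) = (x - c) ∧ ∫₀¹ t ^ (n - m - 2) F(c + t (x - c)) dt`. If `m + 2 = n`, then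
`dB₀ = 0` for lack of indices. Otherwise `n ≥ 3`; solve `ΔA = B₀` on `U` component by component and
antisymmetrize (`poisson_isAlt`). Since `δd + dδ = Δ` (`divg_extDer_add_extDer_divg`), the field
`B = dδA = B₀ - δdA` is closed because `d² = 0`, and `δB = δB₀ = F` because `δ² = 0`.

The analytic core is the solvability of the Poisson equation `Δu = g` on a star-shaped open set for
an arbitrary smooth `g` with no control at the boundary (`poisson`), which is obtained along the lines
of the Mittag-Leffler theorem. The function `‖x‖ ^ (2 - n)` is, up to a constant, a fundamental
solution of the Laplacian (`cv_gam_lap`), so the equation is solvable near each compact set. Solutions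
on an exhaustion differ by harmonic functions, and these are approximated by functions harmonic on
larger sets (`runge`): a functional on `C(K, ℝ)` vanishing on the latter kills every point charge with
pole outside the star-shaped set `K`, because the charges depend analytically on the pole as it is
pushed to infinity along a ray. The corrections converge uniformly on compact sets, and `weyl` shows
that their limits are smooth and harmonic.
-/

/-- Partial derivative of `f` at `x` in direction `v`. -/
noncomputable def pd {E F : Type*} [NormedAddCommGroup E] [NormedSpace ℝ E]
    [NormedAddCommGroup F] [NormedSpace ℝ F] (f : E → F) (v : E) (x : E) : F :=
  fderiv ℝ f x v

/-- A `k`-tensor field is antisymmetric on `U` if permuting its indices multiplies it by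
the sign of the permutation. -/
def IsAntisymmOn (n k : ℕ) (U : Set (EuclideanSpace ℝ (Fin n)))
    (F : EuclideanSpace ℝ (Fin n) → (Fin k → Fin n) → ℝ) : Prop :=
  ∀ x ∈ U, ∀ i : Fin k → Fin n, ∀ σ : Equiv.Perm (Fin k),
    F x (i ∘ σ) = ((Equiv.Perm.sign σ : ℤ) : ℝ) * F x i

/-- The exterior derivative of a `k`-tensor field, in coordinates:
`(dF)_{j₀…j_k} = Σ_m (−1)^m ∂_{j_m} F_{j₀…ĵ_m…j_k}`. -/
noncomputable def extDer (n k : ℕ)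
    (F : EuclideanSpace ℝ (Fin n) → (Fin k → Fin n) → ℝ) :
    EuclideanSpace ℝ (Fin n) → (Fin (k + 1) → Fin n) → ℝ :=
  fun x j => ∑ m : Fin (k + 1),
    (-1 : ℝ) ^ (m : ℕ) * pd (fun y => F y (j ∘ m.succAbove)) (EuclideanSpace.single (j m) 1) x

/-- The divergence of a `(k+1)`-tensor field, in coordinates:
`(δF)_{i₂…i_k} = Σ_j ∂_j F_{j i₂…i_k}`. -/
noncomputable def divg (n k : ℕ)
    (F : EuclideanSpace ℝ (Fin n) → (Fin (k + 1) → Fin n) → ℝ) :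
    EuclideanSpace ℝ (Fin n) → (Fin k → Fin n) → ℝ :=
  fun x i => ∑ j : Fin n, pd (fun y => F y (Fin.cons j i)) (EuclideanSpace.single j 1) x

/-! ### Partial derivatives, the Laplacian and convolution -/

section Calculus

open Set Filter Topology MeasureTheory

variable {n : ℕ}

/-- The Laplacian `Σ_i ∂_i ∂_i f` of a real function on `ℝⁿ`, in terms of the coordinate
derivatives `pd`. -/
noncomputable def lap (f : EuclideanSpace ℝ (Fin n) → ℝ) (x : EuclideanSpace ℝ (Fin n)) : ℝ :=
  ∑ i : Fin n, pd (pd f (EuclideanSpace.single i 1)) (EuclideanSpace.single i 1) x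

section pd

variable {E : Type*} [NormedAddCommGroup E] [NormedSpace ℝ E]

lemma pd_contDiff {f : E → ℝ} (hf : ContDiff ℝ (⊤ : ℕ∞) f) (v : E) :
    ContDiff ℝ (⊤ : ℕ∞) (pd f v) := by
  unfold pd
  exact (hf.fderiv_right (m := (⊤ : ℕ∞)) (by norm_cast)).clm_apply contDiff_const

lemma pd_contDiffOn {U : Set E} (hU : IsOpen U) {f : E → ℝ}
    (hf : ContDiffOn ℝ (⊤ : ℕ∞) f U) (v : E) : ContDiffOn ℝ (⊤ : ℕ∞) (pd f v) U := by
  unfold pd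
  exact (hf.fderiv_of_isOpen hU (m := (⊤ : ℕ∞)) (by norm_cast)).clm_apply contDiffOn_const

lemma pd_congr {f g : E → ℝ} {x : E} (h : f =ᶠ[𝓝 x] g) (v : E) : pd f v x = pd g v x := by
  unfold pd; rw [h.fderiv_eq]

lemma pd_congr' {f g : E → ℝ} {x : E} (h : f =ᶠ[𝓝 x] g) (v : E) :
    pd f v =ᶠ[𝓝 x] pd g v :=
  (eventually_eventually_nhds.2 h).mono fun _ hy => pd_congr hy v

lemma pd_hasCompactSupport {f : E → ℝ} (hf : HasCompactSupport f) (v : E) :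
    HasCompactSupport (pd f v) := hf.fderiv_apply ℝ v

lemma ContDiff.dAt {f : E → ℝ} (hf : ContDiff ℝ (⊤ : ℕ∞) f) (x : E) : DifferentiableAt ℝ f x :=
  (hf.differentiable (by simp)).differentiableAt

lemma pd_add {f g : E → ℝ} {x : E} (hf : DifferentiableAt ℝ f x) (hg : DifferentiableAt ℝ g x)
    (v : E) : pd (fun y => f y + g y) v x = pd f v x + pd g v x := by
  unfold pd; rw [fderiv_fun_add hf hg]; rfl

lemma pd_sub {f g : E → ℝ} {x : E} (hf : DifferentiableAt ℝ f x) (hg : DifferentiableAt ℝ g x)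
    (v : E) : pd (fun y => f y - g y) v x = pd f v x - pd g v x := by
  unfold pd; rw [fderiv_fun_sub hf hg]; rfl

lemma pd_sum {ι : Type*} {s : Finset ι} {f : ι → E → ℝ} {x : E}
    (hf : ∀ i ∈ s, DifferentiableAt ℝ (f i) x) (v : E) :
    pd (fun y => ∑ i ∈ s, f i y) v x = ∑ i ∈ s, pd (f i) v x := by
  unfold pd; rw [fderiv_fun_sum hf]; simp

lemma pd_const_mul {f : E → ℝ} {x : E} (hf : DifferentiableAt ℝ f x) (a : ℝ) (v : E) :
    pd (fun y => a * f y) v x = a * pd f v x := by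
  unfold pd; rw [fderiv_const_mul hf]; rfl

lemma pd_mul {f g : E → ℝ} {x : E} (hf : DifferentiableAt ℝ f x) (hg : DifferentiableAt ℝ g x)
    (v : E) : pd (fun y => f y * g y) v x = pd f v x * g x + f x * pd g v x := by
  unfold pd; rw [fderiv_fun_mul hf hg]; simp; ring

/-- Symmetry of second derivatives. -/
lemma pd_comm {U : Set E} (hU : IsOpen U) {f : E → ℝ}
    (hf : ContDiffOn ℝ (⊤ : ℕ∞) f U) (v w : E) {x : E} (hx : x ∈ U) :
    pd (pd f v) w x = pd (pd f w) v x := by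
  have hfx : ContDiffAt ℝ (⊤ : ℕ∞) f x := hf.contDiffAt (hU.mem_nhds hx)
  have h2 : DifferentiableAt ℝ (fderiv ℝ f) x :=
    ((hfx.fderiv_right (m := 1) (by norm_cast)).differentiableAt (by simp))
  have key : ∀ a b : E, pd (pd f a) b x = fderiv ℝ (fderiv ℝ f) x b a := by
    intro a b
    unfold pd
    rw [fderiv_clm_apply h2 (differentiableAt_const a)]
    simp
  rw [key, key]
  have hs : IsSymmSndFDerivAt ℝ f x := hfx.isSymmSndFDerivAt (by
    simp only [minSmoothness_of_isRCLikeNormedField]; norm_cast)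
  exact hs.eq w v

lemma pd_comp_smul_add {f : E → ℝ} (w : ℝ) (y v : E) (x : E)
    (hf : DifferentiableAt ℝ f (w • x + y)) :
    pd (fun x => f (w • x + y)) v x = w * pd f v (w • x + y) := by
  unfold pd
  have h1 : HasFDerivAt (fun x : E => w • x + y) (w • ContinuousLinearMap.id ℝ E) x :=
    ((hasFDerivAt_id x).const_smul w).add_const y
  have := (hf.hasFDerivAt.comp x h1).fderiv
  simp only [Function.comp_def] at this
  rw [this]; simp

end pd

lemma lap_contDiff {f : EuclideanSpace ℝ (Fin n) → ℝ} (hf : ContDiff ℝ (⊤ : ℕ∞) f) :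
    ContDiff ℝ (⊤ : ℕ∞) (lap f) := by
  unfold lap
  exact ContDiff.sum fun i _ => pd_contDiff (pd_contDiff hf _) _

lemma lap_congr {f g : EuclideanSpace ℝ (Fin n) → ℝ} {x : EuclideanSpace ℝ (Fin n)}
    (h : f =ᶠ[𝓝 x] g) : lap f x = lap g x := by
  unfold lap
  exact Finset.sum_congr rfl fun i _ => pd_congr (pd_congr' h _) _

lemma lap_congr_of_isOpen {f g : EuclideanSpace ℝ (Fin n) → ℝ} {s : Set (EuclideanSpace ℝ (Fin n))}
    (hs : IsOpen s) (h : EqOn f g s) {x : EuclideanSpace ℝ (Fin n)} (hx : x ∈ s) :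
    lap f x = lap g x :=
  lap_congr (h.eventuallyEq_of_mem (hs.mem_nhds hx))

lemma lap_add {f g : EuclideanSpace ℝ (Fin n) → ℝ} {x : EuclideanSpace ℝ (Fin n)}
    (hf : ContDiffAt ℝ (⊤ : ℕ∞) f x) (hg : ContDiffAt ℝ (⊤ : ℕ∞) g x) :
    lap (fun y => f y + g y) x = lap f x + lap g x := by
  have ev : ∀ {h : EuclideanSpace ℝ (Fin n) → ℝ}, ContDiffAt ℝ (⊤ : ℕ∞) h x →
      ∀ᶠ y in 𝓝 x, DifferentiableAt ℝ h y := by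
    intro h hh
    have h1 : ContDiffAt ℝ 1 h x := hh.of_le (by norm_cast)
    exact (h1.eventually (by simp)).mono fun y hy => hy.differentiableAt (by simp)
  have d2 : ∀ {h : EuclideanSpace ℝ (Fin n) → ℝ}, ContDiffAt ℝ (⊤ : ℕ∞) h x →
      ∀ v, DifferentiableAt ℝ (pd h v) x := by
    intro h hh v
    unfold pd
    exact ((hh.fderiv_right (m := 1) (by norm_cast)).differentiableAt
      (by simp)).clm_apply (differentiableAt_const v)
  unfold lap
  rw [← Finset.sum_add_distrib]
  refine Finset.sum_congr rfl fun i _ => ?_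
  rw [← pd_add (d2 hf _) (d2 hg _)]
  apply pd_congr
  filter_upwards [ev hf, ev hg] with y h1 h2
  exact pd_add h1 h2 _

lemma lap_const_mul {f : EuclideanSpace ℝ (Fin n) → ℝ} (hf : ContDiff ℝ (⊤ : ℕ∞) f) (a : ℝ)
    (x : EuclideanSpace ℝ (Fin n)) : lap (fun y => a * f y) x = a * lap f x := by
  unfold lap
  rw [Finset.mul_sum]
  refine Finset.sum_congr rfl fun i _ => ?_
  rw [← pd_const_mul ((pd_contDiff hf _).dAt x)]
  congr 1
  ext y
  exact pd_const_mul (hf.dAt y) _ _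

lemma lap_sub {f g : EuclideanSpace ℝ (Fin n) → ℝ} (hf : ContDiff ℝ (⊤ : ℕ∞) f)
    (hg : ContDiff ℝ (⊤ : ℕ∞) g) (x : EuclideanSpace ℝ (Fin n)) :
    lap (fun y => f y - g y) x = lap f x - lap g x := by
  have h := lap_add (x := x) hf.contDiffAt ((contDiff_const (c := (-1 : ℝ))).mul hg).contDiffAt
  rw [lap_const_mul hg] at h
  have h2 : (fun y => f y - g y) = fun y => f y + (-1) * g y := by ext y; ring
  rw [h2, h]; ring

lemma lap_comp_smul_add {f : EuclideanSpace ℝ (Fin n) → ℝ} (hf : ContDiff ℝ (⊤ : ℕ∞) f) (w : ℝ)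
    (y x : EuclideanSpace ℝ (Fin n)) :
    lap (fun x => f (w • x + y)) x = w ^ 2 * lap f (w • x + y) := by
  unfold lap
  rw [Finset.mul_sum]
  refine Finset.sum_congr rfl fun i _ => ?_
  have h1 : pd (fun x => f (w • x + y)) (EuclideanSpace.single i 1) =
      fun x => w * (pd f (EuclideanSpace.single i 1)) (w • x + y) := by
    ext z; exact pd_comp_smul_add w y _ z (hf.dAt _)
  have hd := (pd_contDiff hf (EuclideanSpace.single i (1 : ℝ))).dAt (w • x + y)
  rw [h1, pd_const_mul, pd_comp_smul_add w y _ x hd]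
  · ring
  · exact DifferentiableAt.comp (f := fun x => w • x + y) x hd (by fun_prop)

lemma lap_hasCompactSupport {f : EuclideanSpace ℝ (Fin n) → ℝ} (hf : HasCompactSupport f) :
    HasCompactSupport (lap f) := by
  refine hf.mono' fun x hx => ?_
  by_contra hx'
  refine hx ?_
  have h0 : f =ᶠ[𝓝 x] fun _ => 0 := notMem_tsupport_iff_eventuallyEq.1 hx'
  rw [lap_congr h0]
  unfold lap pd
  simp

/-- Convolution of real functions on `ℝⁿ`. -/
noncomputable def cv (f g : EuclideanSpace ℝ (Fin n) → ℝ) : EuclideanSpace ℝ (Fin n) → ℝ :=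
  convolution f g (ContinuousLinearMap.mul ℝ ℝ) volume

lemma cv_apply (f g : EuclideanSpace ℝ (Fin n) → ℝ) (x : EuclideanSpace ℝ (Fin n)) :
    cv f g x = ∫ z, f z * g (x - z) := rfl

lemma cv_comm (f g : EuclideanSpace ℝ (Fin n) → ℝ) : cv f g = cv g f := by
  unfold cv
  rw [← convolution_flip]
  congr 1
  ext; simp

lemma cv_contDiff_right {f g : EuclideanSpace ℝ (Fin n) → ℝ} (hf : LocallyIntegrable f)
    (hg : ContDiff ℝ (⊤ : ℕ∞) g) (hgc : HasCompactSupport g) : ContDiff ℝ (⊤ : ℕ∞) (cv f g) :=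
  hgc.contDiff_convolution_right _ hf hg

lemma pd_cv_right {f g : EuclideanSpace ℝ (Fin n) → ℝ} (hf : LocallyIntegrable f)
    (hg : ContDiff ℝ (⊤ : ℕ∞) g) (hgc : HasCompactSupport g) (v : EuclideanSpace ℝ (Fin n)) :
    pd (cv f g) v = cv f (pd g v) := by
  ext x
  have h1 : ContDiff ℝ 1 g := hg.of_le (by norm_cast)
  unfold pd
  unfold cv
  rw [(hgc.hasFDerivAt_convolution_right (ContinuousLinearMap.mul ℝ ℝ) hf h1 x).fderiv,
    convolution_precompR_apply _ hf (hgc.fderiv ℝ) (h1.continuous_fderiv one_ne_zero)]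

lemma lap_cv_right {f g : EuclideanSpace ℝ (Fin n) → ℝ} (hf : LocallyIntegrable f)
    (hg : ContDiff ℝ (⊤ : ℕ∞) g) (hgc : HasCompactSupport g) (x : EuclideanSpace ℝ (Fin n)) :
    lap (cv f g) x = cv f (lap g) x := by
  have hint : ∀ i : Fin n, Integrable fun z =>
      f z * pd (pd g (EuclideanSpace.single i 1)) (EuclideanSpace.single i 1) (x - z) := fun i =>
    ((pd_hasCompactSupport (pd_hasCompactSupport hgc _) _).convolutionExists_right
      (ContinuousLinearMap.mul ℝ ℝ) hf (pd_contDiff (pd_contDiff hg _) _).continuous x)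
  unfold lap
  rw [cv_apply]
  simp only [Finset.mul_sum]
  rw [integral_finsetSum _ fun i _ => hint i]
  refine Finset.sum_congr rfl fun i _ => ?_
  rw [pd_cv_right hf hg hgc, pd_cv_right hf (pd_contDiff hg _) (pd_hasCompactSupport hgc _),
    cv_apply]

/-- For a smooth factor and a smooth compactly supported factor, the Laplacian may be moved from one
factor of a convolution to the other. -/
lemma cv_lap_comm {f g : EuclideanSpace ℝ (Fin n) → ℝ} (hf : ContDiff ℝ (⊤ : ℕ∞) f)
    (hg : ContDiff ℝ (⊤ : ℕ∞) g) (hgc : HasCompactSupport g) (x : EuclideanSpace ℝ (Fin n)) :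
    cv f (lap g) x = cv (lap f) g x := by
  have key : ∀ {f : EuclideanSpace ℝ (Fin n) → ℝ}, ContDiff ℝ (⊤ : ℕ∞) f → ∀ v,
      pd (cv f g) v = cv (pd f v) g := by
    intro f hf v
    ext x
    have h1 : ContDiff ℝ 1 g := hg.of_le (by norm_cast)
    have h1f : ContDiff ℝ 1 f := hf.of_le (by norm_cast)
    obtain ⟨R, hR, hsub⟩ : ∃ R > 0, tsupport g ⊆ Metric.ball 0 R := by
      obtain ⟨R, hR⟩ := hgc.isCompact.isBounded.subset_ball 0
      exact ⟨max R 1, by positivity, hR.trans (Metric.ball_subset_ball (le_max_left _ _))⟩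
    -- near `x` only the values of `f` on a ball matter, so `f` may be cut off
    let b : ContDiffBump x := ⟨R + 2, R + 3, by linarith, by linarith⟩
    let F : EuclideanSpace ℝ (Fin n) → ℝ := fun y => b y * f y
    have hF : ContDiff ℝ (⊤ : ℕ∞) F := b.contDiff.mul hf
    have hFc : HasCompactSupport F := b.hasCompactSupport.mul_right
    have hg0 : ∀ z, R ≤ ‖z‖ → g z = 0 := by
      intro z hz
      refine image_eq_zero_of_notMem_tsupport fun h => ?_
      have := hsub h
      simp at this
      linarith
    have hFf : ∀ y ∈ Metric.ball x (R + 2), F y = f y := by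
      intro y hy
      simp [F, b.one_of_mem_closedBall (Metric.ball_subset_closedBall hy)]
    have hnear : ∀ (G G' : EuclideanSpace ℝ (Fin n) → ℝ), (∀ y ∈ Metric.ball x (R + 2), G y = G' y) →
        ∀ y ∈ Metric.ball x 1, cv G g y = cv G' g y := by
      intro G G' hGG y hy
      rw [cv_comm G g, cv_comm G' g, cv_apply, cv_apply]
      congr 1
      ext z
      by_cases hz : R ≤ ‖z‖
      · simp [hg0 z hz]
      · push Not at hz
        rw [hGG]
        rw [Metric.mem_ball, dist_eq_norm] at hy ⊢
        calc ‖y - z - x‖ = ‖(y - x) - z‖ := by congr 1; abel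
          _ ≤ ‖y - x‖ + ‖z‖ := norm_sub_le _ _
          _ < R + 2 := by linarith
    have e1 : pd (cv f g) v x = pd (cv F g) v x := by
      refine pd_congr ?_ v
      filter_upwards [Metric.ball_mem_nhds x one_pos] with y hy
      exact hnear f F (fun y hy => (hFf y hy).symm) y hy
    rw [e1, cv_comm F g, pd_cv_right (hg.continuous.locallyIntegrable) hF hFc, cv_comm]
    refine hnear _ _ (fun y hy => pd_congr ?_ v) x (Metric.mem_ball_self one_pos)
    filter_upwards [Metric.isOpen_ball.mem_nhds hy] with z hz using hFf z hz
  rw [← lap_cv_right hf.continuous.locallyIntegrable hg hgc]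
  have hint : ∀ i : Fin n, Integrable fun z =>
      pd (pd f (EuclideanSpace.single i 1)) (EuclideanSpace.single i 1) z * g (x - z) := fun i =>
    (hgc.convolutionExists_right (ContinuousLinearMap.mul ℝ ℝ)
      (pd_contDiff (pd_contDiff hf _) _).continuous.locallyIntegrable hg.continuous x)
  unfold lap
  rw [cv_apply]
  simp only [Finset.sum_mul]
  rw [integral_finsetSum _ fun i _ => hint i]
  refine Finset.sum_congr rfl fun i _ => ?_
  rw [key hf, key (pd_contDiff hf _), cv_apply]

end Calculus

/-! ### The fundamental solution of the Laplacian -/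

section FundamentalSolution

open Set Filter Topology MeasureTheory

variable {n : ℕ}

/-- The exponent `(2 - n) / 2`, so that `(‖z‖²) ^ gexp n = ‖z‖ ^ (2 - n)`. -/
noncomputable def gexp (n : ℕ) : ℝ := (2 - n) / 2

/-- The regularized fundamental solution `(‖z‖² + ε) ^ ((2 - n) / 2)`; for `ε = 0` it is the
(unnormalized) fundamental solution `‖z‖ ^ (2 - n)` of the Laplacian. -/
noncomputable def gam (ε : ℝ) (z : EuclideanSpace ℝ (Fin n)) : ℝ := (‖z‖ ^ 2 + ε) ^ gexp n

lemma gexp_neg (hn : 3 ≤ n) : gexp n < 0 := by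
  have : (3 : ℝ) ≤ n := by exact_mod_cast hn
  unfold gexp; linarith

lemma pd_rpow_normSq (ε a : ℝ) (v z : EuclideanSpace ℝ (Fin n)) (h : 0 < ‖z‖ ^ 2 + ε) :
    pd (fun z : EuclideanSpace ℝ (Fin n) => (‖z‖ ^ 2 + ε) ^ a) v z =
      2 * a * (inner ℝ z v * (‖z‖ ^ 2 + ε) ^ (a - 1)) := by
  have h1 : HasFDerivAt (fun z : EuclideanSpace ℝ (Fin n) => ‖z‖ ^ 2 + ε) (2 • innerSL ℝ z) z :=
    (hasStrictFDerivAt_norm_sq z).hasFDerivAt.add_const ε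
  unfold pd
  rw [(h1.rpow_const (p := a) (Or.inl h.ne')).fderiv]
  simp
  ring

lemma rpow_normSq_contDiffAt (ε a : ℝ) {z : EuclideanSpace ℝ (Fin n)} (h : 0 < ‖z‖ ^ 2 + ε) :
    ContDiffAt ℝ (⊤ : ℕ∞) (fun z : EuclideanSpace ℝ (Fin n) => (‖z‖ ^ 2 + ε) ^ a) z :=
  (((contDiff_norm_sq ℝ).add contDiff_const).contDiffAt).rpow_const_of_ne h.ne'

lemma eventually_normSq_add_pos {ε : ℝ} {z : EuclideanSpace ℝ (Fin n)} (h : 0 < ‖z‖ ^ 2 + ε) :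
    ∀ᶠ y : EuclideanSpace ℝ (Fin n) in 𝓝 z, 0 < ‖y‖ ^ 2 + ε :=
  (show Continuous fun y : EuclideanSpace ℝ (Fin n) => ‖y‖ ^ 2 + ε by fun_prop).continuousAt.eventually
    (lt_mem_nhds h)

/-- The Laplacian of the regularized fundamental solution: the choice of exponent makes the terms
without a factor `ε` cancel. -/
lemma lap_gam (ε : ℝ) {z : EuclideanSpace ℝ (Fin n)} (h : 0 < ‖z‖ ^ 2 + ε) :
    lap (gam ε) z = n * (2 - n) * ε * (‖z‖ ^ 2 + ε) ^ (gexp n - 2) := by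
  have h2 : ∀ i : Fin n, pd (pd (gam ε) (EuclideanSpace.single i 1)) (EuclideanSpace.single i 1) z =
      2 * gexp n * (‖z‖ ^ 2 + ε) ^ (gexp n - 1) +
        4 * gexp n * (gexp n - 1) * (z i) ^ 2 * (‖z‖ ^ 2 + ε) ^ (gexp n - 2) := by
    intro i
    have e1 : pd (gam ε) (EuclideanSpace.single i 1) =ᶠ[𝓝 z]
        fun y => 2 * gexp n * (y i * (‖y‖ ^ 2 + ε) ^ (gexp n - 1)) := by
      filter_upwards [eventually_normSq_add_pos h] with y hy
      have := pd_rpow_normSq ε (gexp n) (EuclideanSpace.single i 1) y hy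
      simp only [EuclideanSpace.inner_single_right] at this
      simpa [show gam (n := n) ε = fun z => (‖z‖ ^ 2 + ε) ^ gexp n from rfl] using this
    have d1 : DifferentiableAt ℝ (fun y : EuclideanSpace ℝ (Fin n) => y i) z := by fun_prop
    have d2 := (rpow_normSq_contDiffAt ε (gexp n - 1) h).differentiableAt (by simp)
    have p1 : pd (fun y : EuclideanSpace ℝ (Fin n) => y i) (EuclideanSpace.single i 1) z = 1 := by
      unfold pd
      have : HasFDerivAt (fun y : EuclideanSpace ℝ (Fin n) => y i)
        (EuclideanSpace.proj i : EuclideanSpace ℝ (Fin n) →L[ℝ] ℝ) z :=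
        (EuclideanSpace.proj i : EuclideanSpace ℝ (Fin n) →L[ℝ] ℝ).hasFDerivAt
      rw [this.fderiv]
      simp
    rw [pd_congr e1, pd_const_mul (d1.fun_mul d2), pd_mul d1 d2, p1, pd_rpow_normSq _ _ _ _ h]
    simp only [EuclideanSpace.inner_single_right]
    rw [show gexp n - 1 - 1 = gexp n - 2 by ring]
    simp
    ring
  unfold lap
  simp only [h2, Finset.sum_add_distrib, Finset.sum_const, Finset.card_univ, Fintype.card_fin,
    ← Finset.sum_mul, ← Finset.mul_sum]
  have h3 : ∑ i, (z i) ^ 2 = ‖z‖ ^ 2 := by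
    rw [EuclideanSpace.norm_sq_eq]; simp
  have h4 : (‖z‖ ^ 2 + ε) ^ (gexp n - 1) = (‖z‖ ^ 2 + ε) * (‖z‖ ^ 2 + ε) ^ (gexp n - 2) := by
    rw [show gexp n - 1 = 1 + (gexp n - 2) by ring, Real.rpow_add h, Real.rpow_one]
  rw [h3, h4]
  unfold gexp
  simp
  ring

lemma gam_contDiffAt (ε : ℝ) {z : EuclideanSpace ℝ (Fin n)} (h : 0 < ‖z‖ ^ 2 + ε) :
    ContDiffAt ℝ (⊤ : ℕ∞) (gam ε) z := rpow_normSq_contDiffAt ε _ h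

lemma gam_contDiff {ε : ℝ} (h : 0 < ε) : ContDiff ℝ (⊤ : ℕ∞) (gam (n := n) ε) :=
  contDiff_iff_contDiffAt.2 fun _ => gam_contDiffAt ε (by positivity)

lemma gam_nonneg {ε : ℝ} (h : 0 ≤ ε) (z : EuclideanSpace ℝ (Fin n)) : 0 ≤ gam ε z :=
  Real.rpow_nonneg (by positivity) _

lemma gam_le (hn : 3 ≤ n) {ε : ℝ} (h : 0 ≤ ε) {z : EuclideanSpace ℝ (Fin n)} (hz : z ≠ 0) :
    gam ε z ≤ gam 0 z := by
  unfold gam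
  have : 0 < ‖z‖ := norm_pos_iff.2 hz
  exact Real.rpow_le_rpow_of_nonpos (by positivity) (by linarith) (gexp_neg hn).le

lemma gam_zero_locallyIntegrable (hn : 3 ≤ n) :
    LocallyIntegrable (gam (n := n) 0) := by
  have : Nonempty (Fin n) := ⟨⟨0, by omega⟩⟩
  have key : ∀ R : ℝ, IntegrableOn (gam (n := n) 0) (Metric.ball 0 R) := by
    intro R
    have hcont : ContinuousOn (fun y : ℝ => y) (Ioo 0 R) := continuousOn_id
    rw [← integrable_indicator_iff Metric.isOpen_ball.measurableSet]
    have e : (Metric.ball 0 R).indicator (gam (n := n) 0) =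
        fun z => (fun r : ℝ => if r < R then (r ^ 2) ^ gexp n else 0) ‖z‖ := by
      ext z
      simp [indicator, gam]
    rw [e, integrable_fun_norm_addHaar (μ := volume)
      (f := fun r : ℝ => if r < R then (r ^ 2) ^ gexp n else 0)]
    have : IntegrableOn (fun y : ℝ => (Ioo 0 R).indicator (fun y => y) y) (Ioi 0) := by
      refine Integrable.integrableOn ?_
      rw [integrable_indicator_iff measurableSet_Ioo]
      exact (continuous_id.integrableOn_Icc (a := 0) (b := R)).mono_set Ioo_subset_Icc_self
    refine this.congr_fun ?_ measurableSet_Ioi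
    intro y (hy : 0 < y)
    by_cases hyR : y < R
    · simp only [indicator, mem_Ioo, hy, hyR, and_self, if_true, finrank_euclideanSpace,
        Fintype.card_fin, smul_eq_mul]
      rw [← Real.rpow_natCast y 2, ← Real.rpow_mul hy.le, ← Real.rpow_natCast y (n - 1),
        ← Real.rpow_add hy]
      rw [show ((n - 1 : ℕ) : ℝ) + ((2 : ℕ) : ℝ) * gexp n = 1 by
        rw [Nat.cast_sub (by omega)]; unfold gexp; push_cast; ring]
      simp
    · simp [indicator, hyR]
  rw [locallyIntegrable_iff]
  intro k hk
  obtain ⟨R, hR⟩ := hk.isBounded.subset_ball 0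
  exact (key R).mono_set hR

/-- The kernel `Δ (‖z‖² + 1) ^ ((2 - n) / 2)`, whose rescalings form an approximate identity up to
the factor `gconst`. -/
noncomputable def gker (n : ℕ) (z : EuclideanSpace ℝ (Fin n)) : ℝ :=
  n * (2 - n) * (‖z‖ ^ 2 + 1) ^ (gexp n - 2)

/-- The total mass of `gker`, i.e. the constant `c` with `Δ ‖z‖ ^ (2 - n) = c δ₀`. -/
noncomputable def gconst (n : ℕ) : ℝ := ∫ z, gker n z

lemma gker_integrable (n : ℕ) : Integrable (gker n) := by
  unfold gker
  refine Integrable.const_mul ?_ _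
  have := integrable_rpow_neg_one_add_norm_sq (E := EuclideanSpace ℝ (Fin n)) (μ := volume)
    (r := n + 2) (by simp)
  refine this.congr (Eventually.of_forall fun z => ?_)
  simp only
  rw [add_comm]
  congr 1
  unfold gexp; ring

lemma gconst_neg (hn : 3 ≤ n) : gconst n < 0 := by
  have hn' : (3 : ℝ) ≤ n := by exact_mod_cast hn
  have h0 : ∀ z : EuclideanSpace ℝ (Fin n), 0 < -gker n z := by
    intro z
    unfold gker
    have : 0 < (‖z‖ ^ 2 + 1) ^ (gexp n - 2) := by positivity
    have h2 : 0 < -((n : ℝ) * (2 - n)) := by nlinarith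
    nlinarith [mul_pos h2 this]
  have : 0 < ∫ z, -gker n z := by
    rw [integral_pos_iff_support_of_nonneg (fun z => (h0 z).le) (gker_integrable n).neg]
    have : Function.support (fun z => -gker n z) = univ := by
      ext z; simp only [Function.mem_support, mem_univ, iff_true]; exact (h0 z).ne'
    rw [this]
    exact Measure.measure_univ_pos.2 (NeZero.ne _)
  rw [integral_neg] at this
  unfold gconst
  linarith

/-- `‖·‖ ^ (2 - n)` is a fundamental solution: `Γ ∗ Δφ = c φ` for test functions `φ`. Integrating by
parts against the regularized kernels `gam ε` produces an approximate identity. -/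
theorem cv_gam_lap (hn : 3 ≤ n) {φ : EuclideanSpace ℝ (Fin n) → ℝ} (hφ : ContDiff ℝ (⊤ : ℕ∞) φ)
    (hφc : HasCompactSupport φ) (x : EuclideanSpace ℝ (Fin n)) :
    cv (gam 0) (lap φ) x = gconst n * φ x := by
  have : Nonempty (Fin n) := ⟨⟨0, by omega⟩⟩
  let s : ℕ → ℝ := fun k => 1 / ((k : ℝ) + 1)
  have hs : ∀ k, 0 < s k := fun k => by simp only [s]; positivity
  have hs0 : Tendsto s atTop (𝓝 0) := tendsto_one_div_add_atTop_nhds_zero_nat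
  have hψ := lap_contDiff hφ
  have hψc := lap_hasCompactSupport hφc
  have hgloc := gam_zero_locallyIntegrable hn
  have hne : ∀ᵐ z : EuclideanSpace ℝ (Fin n), z ≠ 0 := by
    rw [ae_iff]; simp
  have lim1 : Tendsto (fun k => cv (gam (s k ^ 2)) (lap φ) x) atTop (𝓝 (cv (gam 0) (lap φ) x)) := by
    simp only [cv_apply]
    refine tendsto_integral_of_dominated_convergence (fun z => ‖gam 0 z * lap φ (x - z)‖) ?_ ?_ ?_ ?_
    · intro k
      exact (((gam_contDiff (by have := hs k; positivity)).continuous).mul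
        (hψ.continuous.comp (by fun_prop))).aestronglyMeasurable
    · exact (hψc.convolutionExists_right (ContinuousLinearMap.mul ℝ ℝ) hgloc hψ.continuous x).norm
    · intro k
      filter_upwards [hne] with z hz
      rw [norm_mul, norm_mul]
      gcongr
      rw [Real.norm_of_nonneg (gam_nonneg (by positivity) z), Real.norm_of_nonneg (gam_nonneg le_rfl z)]
      exact gam_le hn (by positivity) hz
    · filter_upwards [hne] with z hz
      refine Tendsto.mul_const _ ?_
      unfold gam
      have hz' : 0 < ‖z‖ := norm_pos_iff.2 hz
      have : Tendsto (fun k => ‖z‖ ^ 2 + s k ^ 2) atTop (𝓝 (‖z‖ ^ 2 + 0)) := by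
        have := (hs0.pow 2).const_add (‖z‖ ^ 2)
        simpa using this
      exact this.rpow_const (Or.inl (by positivity))
  have lim2 : Tendsto (fun k => cv (gam (s k ^ 2)) (lap φ) x) atTop (𝓝 (gconst n * φ x)) := by
    have e : ∀ k, cv (gam (s k ^ 2)) (lap φ) x = ∫ z, gker n z * φ (x - s k • z) := by
      intro k
      have hk := hs k
      rw [cv_lap_comm (gam_contDiff (by positivity)) hφ hφc, cv_apply]
      have := Measure.integral_comp_smul (volume : Measure (EuclideanSpace ℝ (Fin n)))
        (fun z => lap (gam (s k ^ 2)) z * φ (x - z)) (s k)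
      rw [finrank_euclideanSpace, Fintype.card_fin, abs_of_pos (by positivity), smul_eq_mul,
        eq_comm, inv_mul_eq_iff_eq_mul₀ (by positivity)] at this
      rw [this, ← integral_const_mul]
      congr 1
      ext z
      rw [lap_gam _ (by positivity)]
      have e2 : ‖s k • z‖ ^ 2 + s k ^ 2 = (s k ^ 2) * (‖z‖ ^ 2 + 1) := by
        rw [norm_smul, Real.norm_of_nonneg hk.le]; ring
      rw [e2, Real.mul_rpow (by positivity) (by positivity)]
      have e3 : s k ^ n * (s k ^ 2 * (s k ^ 2) ^ (gexp n - 2)) = 1 := by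
        rw [← Real.rpow_natCast, ← Real.rpow_natCast, ← Real.rpow_mul hk.le, ← Real.rpow_add hk,
          ← Real.rpow_add hk]
        rw [show (n : ℝ) + (((2 : ℕ) : ℝ) + ((2 : ℕ) : ℝ) * (gexp n - 2)) = 0 by
          unfold gexp; push_cast; ring, Real.rpow_zero]
      unfold gker
      linear_combination (n * (2 - n) * (‖z‖ ^ 2 + 1) ^ (gexp n - 2) * φ (x - s k • z)) * e3
    simp only [e]
    unfold gconst
    rw [← integral_mul_const]
    obtain ⟨C, hC⟩ := hφc.exists_bound_of_continuous hφ.continuous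
    refine tendsto_integral_of_dominated_convergence (fun z => ‖gker n z‖ * C) ?_ ?_ ?_ ?_
    · intro k
      exact (gker_integrable n).aestronglyMeasurable.mul
        (hφ.continuous.comp (by fun_prop)).aestronglyMeasurable
    · exact (gker_integrable n).norm.mul_const _
    · intro k
      refine Eventually.of_forall fun z => ?_
      rw [norm_mul]
      gcongr
      exact hC _
    · refine Eventually.of_forall fun z => ?_
      refine Tendsto.const_mul _ ?_
      refine (hφ.continuous.tendsto x).comp ?_
      have : Tendsto (fun k => x - s k • z) atTop (𝓝 (x - (0 : ℝ) • z)) :=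
        tendsto_const_nhds.sub (hs0.smul_const z)
      simpa using this
  exact tendsto_nhds_unique lim1 lim2

/-- A smooth function on `ℝⁿ` which agrees with `‖z‖ ^ (2 - n)` for `‖z‖ ≥ ρ`. -/
noncomputable def gcut (ρ : ℝ) (z : EuclideanSpace ℝ (Fin n)) : ℝ :=
  Real.smoothTransition (4 * ‖z‖ ^ 2 / ρ ^ 2 - 1) * gam 0 z

lemma gcut_eq {ρ : ℝ} (hρ : 0 < ρ) {z : EuclideanSpace ℝ (Fin n)} (hz : ρ ≤ ‖z‖) :
    gcut ρ z = gam 0 z := by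
  unfold gcut
  rw [Real.smoothTransition.one_of_one_le, one_mul]
  have : ρ ^ 2 ≤ ‖z‖ ^ 2 := by gcongr
  have : 4 ≤ 4 * ‖z‖ ^ 2 / ρ ^ 2 := by
    rw [le_div_iff₀ (by positivity)]; linarith
  linarith

lemma gcut_contDiff {ρ : ℝ} (hρ : 0 < ρ) : ContDiff ℝ (⊤ : ℕ∞) (gcut (n := n) ρ) := by
  rw [contDiff_iff_contDiffAt]
  intro z
  by_cases hz : z = 0
  · have : gcut (n := n) ρ =ᶠ[𝓝 z] fun _ => 0 := by
      have hb : Metric.ball (0 : EuclideanSpace ℝ (Fin n)) (ρ / 2) ∈ 𝓝 z := by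
        rw [hz]; exact Metric.ball_mem_nhds _ (by positivity)
      filter_upwards [hb] with y hy
      unfold gcut
      rw [Real.smoothTransition.zero_of_nonpos, zero_mul]
      have : ‖y‖ < ρ / 2 := by simpa using hy
      have : ‖y‖ ^ 2 ≤ (ρ / 2) ^ 2 := by gcongr
      have : 4 * ‖y‖ ^ 2 / ρ ^ 2 ≤ 1 := by
        rw [div_le_one (by positivity)]; linarith
      linarith
    exact contDiffAt_const.congr_of_eventuallyEq this
  · have hz' : 0 < ‖z‖ := norm_pos_iff.2 hz
    refine ContDiffAt.mul ?_ (gam_contDiffAt 0 (by positivity))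
    refine ContDiff.contDiffAt ?_
    exact Real.smoothTransition.contDiff.comp
      (((contDiff_const.mul (contDiff_norm_sq ℝ)).div_const _).sub contDiff_const)

lemma lap_gcut {ρ : ℝ} (hρ : 0 < ρ) {z : EuclideanSpace ℝ (Fin n)} (hz : ρ < ‖z‖) :
    lap (gcut ρ) z = 0 := by
  have ho : IsOpen {z : EuclideanSpace ℝ (Fin n) | ρ < ‖z‖} :=
    isOpen_lt continuous_const continuous_norm
  rw [lap_congr_of_isOpen ho (fun y hy => gcut_eq hρ (le_of_lt hy)) hz, lap_gam]
  · simp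
  · have : 0 < ‖z‖ := hρ.trans hz
    positivity

end FundamentalSolution

/-! ### Weyl's lemma -/

section WeylRunge

open Set Filter Topology MeasureTheory

variable {n : ℕ}

/-- Smooth Urysohn: a test function equal to `1` near a compact set and supported in an open set. -/
lemma exists_cutoff {K U : Set (EuclideanSpace ℝ (Fin n))} (hK : IsCompact K) (hU : IsOpen U)
    (hKU : K ⊆ U) : ∃ χ : EuclideanSpace ℝ (Fin n) → ℝ, ContDiff ℝ (⊤ : ℕ∞) χ ∧
      HasCompactSupport χ ∧ tsupport χ ⊆ U ∧ ∃ V, IsOpen V ∧ K ⊆ V ∧ EqOn χ 1 V := by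
  obtain ⟨L, hL, hKL, hLU⟩ := exists_compact_between hK hU hKU
  obtain ⟨L', hL', hLL', hLU'⟩ := exists_compact_between hL hU hLU
  obtain ⟨f, hf1, hf2, -⟩ := exists_contMDiffMap_one_nhds_of_subset_interior
    (modelWithCornersSelf ℝ (EuclideanSpace ℝ (Fin n))) (n := (⊤ : ℕ∞)) hL.isClosed hLL'
  have hsub : Function.support f ⊆ L' := by
    intro x hx
    by_contra h
    exact hx (hf2 x h)
  have hts : tsupport f ⊆ L' := closure_minimal hsub hL'.isClosed
  refine ⟨f, f.contMDiff.contDiff, hL'.of_isClosed_subset (isClosed_tsupport _) hts,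
    hts.trans hLU', interior L, isOpen_interior, hKL, ?_⟩
  intro x hx
  exact (eventually_nhdsSet_iff_forall.1 hf1 x (interior_subset hx)).self_of_nhds

/-- The representation `c h = ω ∗ h` of functions that are harmonic on a ball, where
`ω = Δ (gcut ρ)` is a test function supported in the ball of radius `ρ`. -/
lemma harmonic_repr (hn : 3 ≤ n) {h : EuclideanSpace ℝ (Fin n) → ℝ} (hh : ContDiff ℝ (⊤ : ℕ∞) h)
    {x₀ : EuclideanSpace ℝ (Fin n)} {ρ : ℝ} (hρ : 0 < ρ)
    (hlap : ∀ x ∈ Metric.ball x₀ (4 * ρ), lap h x = 0) {x : EuclideanSpace ℝ (Fin n)}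
    (hx : x ∈ Metric.ball x₀ (2 * ρ)) :
    gconst n * h x = cv (lap (gcut ρ)) ((Metric.ball x₀ (3 * ρ)).indicator h) x := by
  let b : ContDiffBump x₀ := ⟨3 * ρ, 4 * ρ, by linarith, by linarith⟩
  let φ : EuclideanSpace ℝ (Fin n) → ℝ := fun y => b y * h y
  have hφ : ContDiff ℝ (⊤ : ℕ∞) φ := b.contDiff.mul hh
  have hφc : HasCompactSupport φ := b.hasCompactSupport.mul_right
  have hφh : EqOn φ h (Metric.ball x₀ (3 * ρ)) := by
    intro y hy
    simp [φ, b.one_of_mem_closedBall (Metric.ball_subset_closedBall hy)]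
  have hxz : ∀ z : EuclideanSpace ℝ (Fin n), ‖z‖ ≤ ρ → x - z ∈ Metric.ball x₀ (3 * ρ) := by
    intro z hz
    rw [Metric.mem_ball, dist_eq_norm] at hx ⊢
    calc ‖x - z - x₀‖ = ‖(x - x₀) - z‖ := by congr 1; abel
      _ ≤ ‖x - x₀‖ + ‖z‖ := norm_sub_le _ _
      _ < 3 * ρ := by linarith
  have e1 : cv (gam 0) (lap φ) x = cv (gcut ρ) (lap φ) x := by
    rw [cv_apply, cv_apply]
    congr 1
    ext z
    by_cases hz : ρ ≤ ‖z‖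
    · rw [gcut_eq hρ hz]
    · have hz' := hxz z (by linarith)
      rw [lap_congr_of_isOpen Metric.isOpen_ball hφh hz', hlap _
        (Metric.ball_subset_ball (by linarith) hz')]
      simp
  have e2 : cv (lap (gcut ρ)) φ x =
      cv (lap (gcut ρ)) ((Metric.ball x₀ (3 * ρ)).indicator h) x := by
    rw [cv_apply, cv_apply]
    congr 1
    ext z
    by_cases hz : ρ < ‖z‖
    · rw [lap_gcut hρ hz]; simp
    · have hz' := hxz z (by linarith)
      rw [hφh hz', indicator_of_mem hz']
  rw [← e2, ← cv_lap_comm (gcut_contDiff hρ) hφ hφc, ← e1, cv_gam_lap hn hφ hφc,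
    hφh (Metric.ball_subset_ball (by linarith) hx)]

/-- **Weyl's lemma**: a uniform limit of harmonic functions is smooth and harmonic. -/
theorem weyl (hn : 3 ≤ n) {h : ℕ → EuclideanSpace ℝ (Fin n) → ℝ}
    (hh : ∀ k, ContDiff ℝ (⊤ : ℕ∞) (h k)) {x₀ : EuclideanSpace ℝ (Fin n)} {ρ : ℝ} (hρ : 0 < ρ)
    (hlap : ∀ k, ∀ x ∈ Metric.ball x₀ (4 * ρ), lap (h k) x = 0)
    {l : EuclideanSpace ℝ (Fin n) → ℝ}
    (hl : TendstoUniformlyOn h l atTop (Metric.ball x₀ (4 * ρ))) :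
    ∃ L : EuclideanSpace ℝ (Fin n) → ℝ, ContDiff ℝ (⊤ : ℕ∞) L ∧
      ∀ x ∈ Metric.ball x₀ (2 * ρ), L x = l x ∧ lap L x = 0 := by
  set B := Metric.ball x₀ (3 * ρ) with hB
  have hc := gconst_neg hn
  have hω : ContDiff ℝ (⊤ : ℕ∞) (lap (gcut (n := n) ρ)) := lap_contDiff (gcut_contDiff hρ)
  have hωc : HasCompactSupport (lap (gcut (n := n) ρ)) := by
    refine HasCompactSupport.intro (isCompact_closedBall 0 ρ) fun z hz => lap_gcut hρ ?_
    simpa using hz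
  have hlcont : ContinuousOn l (Metric.ball x₀ (4 * ρ)) :=
    hl.continuousOn (Eventually.of_forall fun k => (hh k).continuous.continuousOn).frequently
  have hint : ∀ f : EuclideanSpace ℝ (Fin n) → ℝ, ContinuousOn f (Metric.ball x₀ (4 * ρ)) →
      Integrable (B.indicator f) := by
    intro f hf
    rw [integrable_indicator_iff Metric.isOpen_ball.measurableSet]
    refine IntegrableOn.mono_set (t := Metric.closedBall x₀ (3 * ρ)) ?_ Metric.ball_subset_closedBall
    exact (hf.mono (Metric.closedBall_subset_ball (by linarith))).integrableOn_compact
      (isCompact_closedBall _ _)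
  have hli := hint l hlcont
  have hki : ∀ k, Integrable (B.indicator (h k)) :=
    fun k => hint _ (hh k).continuous.continuousOn
  -- convolution with a fixed test function passes to the uniform limit
  have hlim : ∀ ω : EuclideanSpace ℝ (Fin n) → ℝ, Continuous ω → HasCompactSupport ω → ∀ x,
      Tendsto (fun k => cv ω (B.indicator (h k)) x) atTop (𝓝 (cv ω (B.indicator l) x)) := by
    intro ω ho hoc x
    have hunif := Metric.tendstoUniformlyOn_iff.1 hl 1 one_pos
    obtain ⟨C, hC⟩ := (isCompact_closedBall x₀ (3 * ρ)).exists_bound_of_continuousOn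
      (hlcont.mono (Metric.closedBall_subset_ball (by linarith)))
    simp only [cv_apply]
    refine tendsto_integral_filter_of_dominated_convergence (fun z => ‖ω z‖ * (max C 0 + 1)) ?_ ?_ ?_ ?_
    · refine Eventually.of_forall fun k => ho.aestronglyMeasurable.mul ?_
      exact (hki k).aestronglyMeasurable.comp_quasiMeasurePreserving
        (quasiMeasurePreserving_sub_left volume x)
    · filter_upwards [hunif] with k hk
      refine Eventually.of_forall fun z => ?_
      rw [norm_mul]
      gcongr
      by_cases hz : x - z ∈ B
      · rw [indicator_of_mem hz]
        have h1 := hk (x - z) (Metric.ball_subset_ball (by linarith) hz)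
        have h2 := hC (x - z) (Metric.ball_subset_closedBall hz)
        rw [dist_comm, Real.dist_eq] at h1
        rw [Real.norm_eq_abs] at h2 ⊢
        have h3 := abs_sub_abs_le_abs_sub (h k (x - z)) (l (x - z))
        have h4 := le_max_left C 0
        linarith
      · rw [indicator_of_notMem hz]
        simp; positivity
    · exact ((ho.integrable_of_hasCompactSupport hoc).norm).mul_const _
    · refine Eventually.of_forall fun z => Tendsto.const_mul _ ?_
      by_cases hz : x - z ∈ B
      · simp only [indicator_of_mem hz]
        exact hl.tendsto_at (Metric.ball_subset_ball (by linarith) hz)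
      · simp only [indicator_of_notMem hz]
        exact tendsto_const_nhds
  have hsm : ∀ f : EuclideanSpace ℝ (Fin n) → ℝ, Integrable f →
      ContDiff ℝ (⊤ : ℕ∞) (cv (lap (gcut ρ)) f) ∧
      ∀ x, lap (cv (lap (gcut ρ)) f) x = cv (lap (lap (gcut ρ))) f x := by
    intro f hf
    rw [cv_comm]
    refine ⟨cv_contDiff_right hf.locallyIntegrable hω hωc, fun x => ?_⟩
    rw [lap_cv_right hf.locallyIntegrable hω hωc, cv_comm]
  refine ⟨fun x => (gconst n)⁻¹ * cv (lap (gcut ρ)) (B.indicator l) x,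
    contDiff_const.mul (hsm _ hli).1, fun x hx => ⟨?_, ?_⟩⟩
  · rw [inv_mul_eq_iff_eq_mul₀ hc.ne]
    refine tendsto_nhds_unique (hlim _ hω.continuous hωc x) ?_
    simp only [hB, ← harmonic_repr hn (hh _) hρ (hlap _) hx]
    exact (hl.tendsto_at (Metric.ball_subset_ball (by linarith) hx)).const_mul _
  · rw [lap_const_mul (hsm _ hli).1, (hsm _ hli).2]
    have h0 : cv (lap (lap (gcut ρ))) (B.indicator l) x = 0 := by
      refine tendsto_nhds_unique (hlim _ (lap_contDiff hω).continuous (lap_hasCompactSupport hωc) x) ?_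
      have : ∀ k, cv (lap (lap (gcut ρ))) (B.indicator (h k)) x = 0 := by
        intro k
        rw [← (hsm _ (hki k)).2]
        rw [lap_congr_of_isOpen Metric.isOpen_ball (g := fun y => gconst n * h k y)
          (fun y hy => (harmonic_repr hn (hh k) hρ (hlap k) hy).symm) hx, lap_const_mul (hh k),
          hlap k x (Metric.ball_subset_ball (by linarith) hx), mul_zero]
      simp only [this]
      exact tendsto_const_nhds
    rw [h0, mul_zero]

end WeylRunge

/-! ### Runge approximation by pole pushing -/

section Runge

open Set Filter Topology MeasureTheory
open scoped ContDiff

variable {n : ℕ}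

/-- Real powers of an analytic curve of positive functions are analytic in the Banach algebra
`C(X, ℝ)`: write the power as `exp (a log q)`, where the logarithm is the local inverse of the
exponential given by the analytic inverse function theorem. -/
lemma analyticAt_rpow_curve {X : Type*} [TopologicalSpace X] [CompactSpace X] (a : ℝ)
    {q Φ : ℝ → C(X, ℝ)} {w₀ : ℝ} (hq : AnalyticAt ℝ q w₀) (hpos : ∀ x, 0 < q w₀ x)
    (hΦ : ∀ᶠ w in 𝓝 w₀, ∀ x, Φ w x = (q w x) ^ a) : AnalyticAt ℝ Φ w₀ := by
  have exp_apply : ∀ (p : C(X, ℝ)) (x : X), (NormedSpace.exp p) x = Real.exp (p x) := by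
    intro p x
    have := NormedSpace.map_exp (ContinuousMap.evalAlgHom ℝ ℝ x)
      (ContinuousMap.evalCLM ℝ x).continuous p
    rw [Real.exp_eq_exp_ℝ]
    exact this
  let l : C(X, ℝ) := ⟨fun x => Real.log (q w₀ x),
    (ContinuousMap.continuous (q w₀)).log fun x => (hpos x).ne'⟩
  have hl : NormedSpace.exp l = q w₀ := by
    ext x; rw [exp_apply]; exact Real.exp_log (hpos x)
  have hexp : ContDiffAt ℝ ω (NormedSpace.exp : C(X, ℝ) → C(X, ℝ)) l :=
    (NormedSpace.exp_analytic (𝕂 := ℝ) l).contDiffAt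
  -- the derivative of `exp` at `l` is multiplication by the unit `exp l`
  let u : C(X, ℝ)ˣ := ⟨NormedSpace.exp l, NormedSpace.exp (-l),
    by ext x; simp [exp_apply, ← Real.exp_add], by ext x; simp [exp_apply, ← Real.exp_add]⟩
  let e : C(X, ℝ) ≃L[ℝ] C(X, ℝ) := ContinuousLinearEquiv.equivOfInverse
    (ContinuousLinearMap.mul ℝ _ (u : C(X, ℝ))) (ContinuousLinearMap.mul ℝ _ ((u⁻¹ : C(X, ℝ)ˣ) : C(X, ℝ)))
    (fun p => by simp) (fun p => by simp)
  have hder : HasFDerivAt (NormedSpace.exp : C(X, ℝ) → C(X, ℝ)) (e : C(X, ℝ) →L[ℝ] C(X, ℝ)) l := by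
    have := (hasStrictFDerivAt_exp (𝕂 := ℝ) (x := l)).hasFDerivAt
    have he : (e : C(X, ℝ) →L[ℝ] C(X, ℝ)) = NormedSpace.exp l • 1 := rfl
    rw [he]; exact this
  have hstr := hexp.hasStrictFDerivAt' hder (by simp)
  have hinv : ContDiffAt ℝ ω (hexp.localInverse hder (by simp)) (q w₀) := by
    rw [← hl]; exact hexp.to_localInverse hder (by simp)
  have hri : ∀ᶠ p in 𝓝 (q w₀), NormedSpace.exp (hexp.localInverse hder (by simp) p) = p := by
    rw [← hl]; exact hstr.eventually_right_inverse
  have han : AnalyticAt ℝ (fun w => NormedSpace.exp (a • hexp.localInverse hder (by simp) (q w))) w₀ :=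
    (NormedSpace.exp_analytic (𝕂 := ℝ) _).comp
      (((hinv.analyticAt).comp hq).const_smul (c := a))
  refine han.congr ?_
  filter_upwards [hΦ, hq.continuousAt.eventually hri] with w h1 h2
  ext x
  rw [h1 x, exp_apply]
  have h3 : q w x = Real.exp (hexp.localInverse hder (by simp) (q w) x) := by
    rw [← exp_apply, h2]
  rw [h3, ← Real.exp_mul]
  simp [mul_comm]

/-- The restrictions to `K` of smooth functions that are harmonic near `K'`. -/
def harmonicRestrictions (K K' : Set (EuclideanSpace ℝ (Fin n))) : Submodule ℝ C(K, ℝ) where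
  carrier := {g | ∃ f : EuclideanSpace ℝ (Fin n) → ℝ, ContDiff ℝ (⊤ : ℕ∞) f ∧
    (∃ V, IsOpen V ∧ K' ⊆ V ∧ ∀ x ∈ V, lap f x = 0) ∧ ∀ x : K, g x = f x}
  zero_mem' := ⟨fun _ => 0, contDiff_const, ⟨univ, isOpen_univ, subset_univ _, fun x _ => by
    simpa using lap_const_mul (n := n) (contDiff_const (c := (0 : ℝ))) 0 x⟩, fun _ => rfl⟩
  add_mem' := by
    rintro g₁ g₂ ⟨f₁, h₁, ⟨V₁, o₁, s₁, l₁⟩, e₁⟩ ⟨f₂, h₂, ⟨V₂, o₂, s₂, l₂⟩, e₂⟩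
    refine ⟨fun x => f₁ x + f₂ x, h₁.add h₂, ⟨V₁ ∩ V₂, o₁.inter o₂, subset_inter s₁ s₂, ?_⟩, ?_⟩
    · intro x hx
      rw [lap_add h₁.contDiffAt h₂.contDiffAt, l₁ x hx.1, l₂ x hx.2, add_zero]
    · intro x; simp [e₁, e₂]
  smul_mem' := by
    rintro a g ⟨f, h, ⟨V, o, s, l⟩, e⟩
    refine ⟨fun x => a * f x, contDiff_const.mul h, ⟨V, o, s, fun x hx => ?_⟩, fun x => ?_⟩
    · rw [lap_const_mul h, l x hx, mul_zero]
    · simp [e]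

/-- The rescaled point charge `x ↦ ‖w x - y‖ ^ (2 - n)`, modified where `‖w x - y‖ < r` so
as to be smooth, as a function on `K`. -/
noncomputable def charge (K : Set (EuclideanSpace ℝ (Fin n))) {r : ℝ} (hr : 0 < r) (w : ℝ)
    (y : EuclideanSpace ℝ (Fin n)) : C(K, ℝ) :=
  ⟨fun x => gcut r (w • (x : EuclideanSpace ℝ (Fin n)) - y),
    (gcut_contDiff hr).continuous.comp (by fun_prop)⟩

/-- **Pole pushing.** A functional on `C(K, ℝ)` that kills the restrictions of functions harmonic
near `K'` kills the point charges away from `K`: `x ↦ ‖w x - y‖ ^ (2 - n)` has its pole at `y / w`,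
which is far from `K'` for small `w`, and it depends analytically on `w ∈ [0, 1]` since the segment
of poles avoids the star-shaped set `K`. -/
lemma dual_charge_eq_zero {K K' : Set (EuclideanSpace ℝ (Fin n))} [CompactSpace K]
    (h0 : (0 : EuclideanSpace ℝ (Fin n)) ∈ K) (hstar : ∀ t ∈ Icc (0 : ℝ) 1, ∀ x ∈ K, t • x ∈ K)
    (hK' : IsCompact K') (Λ : C(K, ℝ) →L[ℝ] ℝ) (hΛ : ∀ g ∈ harmonicRestrictions K K', Λ g = 0)
    {r : ℝ} (hr : 0 < r) {y : EuclideanSpace ℝ (Fin n)} (hy : ∀ x ∈ K, 2 * r ≤ ‖x - y‖) :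
    Λ (charge K hr 1 y) = 0 := by
  let c₂ : C(K, ℝ) := ⟨fun x => ‖(x : EuclideanSpace ℝ (Fin n))‖ ^ 2, by fun_prop⟩
  let c₁ : C(K, ℝ) := ⟨fun x => inner ℝ (x : EuclideanSpace ℝ (Fin n)) y, by fun_prop⟩
  let c₀ : C(K, ℝ) := ContinuousMap.const K (‖y‖ ^ 2)
  let q : ℝ → C(K, ℝ) := fun w => w ^ 2 • c₂ - (2 * w) • c₁ + c₀
  have hqx : ∀ w (x : K), q w x = ‖w • (x : EuclideanSpace ℝ (Fin n)) - y‖ ^ 2 := by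
    intro w x
    simp only [q, c₂, c₁, c₀, norm_sub_sq_real, norm_smul, inner_smul_left]
    simp
    rw [mul_pow, sq_abs]; ring
  have hqan : ∀ w, AnalyticAt ℝ q w := by
    intro w
    have h1 : AnalyticAt ℝ (fun w : ℝ => w) w := analyticAt_id
    exact (((h1.pow 2).smul analyticAt_const).sub
      ((analyticAt_const.mul h1).smul analyticAt_const)).add analyticAt_const
  have han : AnalyticOnNhd ℝ (fun w => Λ (charge K hr w y)) (Icc 0 1) := by
    intro w₀ hw₀
    have hlow : ∀ x : K, (2 * r) ^ 2 ≤ q w₀ x := by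
      intro x
      rw [hqx]
      have := hy _ (hstar w₀ hw₀ x x.2)
      gcongr
    refine (Λ.analyticAt _).comp (analyticAt_rpow_curve (gexp n) (hqan w₀)
      (fun x => lt_of_lt_of_le (by positivity) (hlow x)) ?_)
    have := (hqan w₀).continuousAt.eventually (Metric.ball_mem_nhds _ (show (0 : ℝ) < r ^ 2 by positivity))
    filter_upwards [this] with w hw x
    have h1 : |q w x - q w₀ x| ≤ dist (q w) (q w₀) := by
      rw [← Real.dist_eq]; exact ContinuousMap.dist_apply_le_dist x
    have h2 : dist (q w) (q w₀) < r ^ 2 := hw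
    have h3 : r ^ 2 ≤ q w x := by
      have := hlow x
      have := abs_le.1 (h1.trans h2.le)
      nlinarith [sq_nonneg r]
    have h4 : r ≤ ‖w • (x : EuclideanSpace ℝ (Fin n)) - y‖ := by
      rw [hqx] at h3
      exact (pow_le_pow_iff_left₀ hr.le (norm_nonneg _) two_ne_zero).1 h3
    change gcut r (w • (x : EuclideanSpace ℝ (Fin n)) - y) = _
    rw [gcut_eq hr h4, hqx, gam, add_zero]
  have hzero : (fun w => Λ (charge K hr w y)) =ᶠ[𝓝 0] 0 := by
    obtain ⟨R, hR, hKR⟩ := hK'.isBounded.subset_ball_lt 0 0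
    have : ∀ᶠ w : ℝ in 𝓝 0, |w| * R < r := by
      have hc : Continuous fun w : ℝ => |w| * R := by fun_prop
      exact hc.continuousAt.eventually (gt_mem_nhds (by simpa using hr))
    filter_upwards [this] with w hw
    refine hΛ _ ⟨fun x => gcut r (w • x - y), (gcut_contDiff hr).comp (by fun_prop),
      ⟨Metric.ball 0 R, Metric.isOpen_ball, hKR, fun x hx => ?_⟩, fun x => rfl⟩
    have h1 := lap_comp_smul_add (gcut_contDiff (n := n) hr) w (-y) x
    simp only [← sub_eq_add_neg] at h1
    rw [h1, lap_gcut hr, mul_zero]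
    have h2 : 2 * r ≤ ‖y‖ := by simpa using hy 0 h0
    have h3 : ‖w • x‖ < r := by
      rw [norm_smul, Real.norm_eq_abs]
      refine lt_of_le_of_lt ?_ hw
      have : ‖x‖ ≤ R := by simpa using (Metric.mem_ball.1 hx).le
      gcongr
    have h4 := norm_sub_norm_le y (w • x)
    rw [norm_sub_rev] at h4
    linarith
  exact han.eqOn_zero_of_preconnected_of_eventuallyEq_zero isPreconnected_Icc
    (by simp) hzero (show (1 : ℝ) ∈ Icc (0 : ℝ) 1 by simp)

/-- **Runge approximation.** A function harmonic near a compact set `K` that is star-shaped about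
the origin is a uniform limit on `K` of functions harmonic near any larger compact set: it is a
superposition of point charges outside `K`, which are dealt with by pole pushing and Hahn–Banach. -/
theorem runge (hn : 3 ≤ n) {K K' : Set (EuclideanSpace ℝ (Fin n))} (hK : IsCompact K)
    (h0 : (0 : EuclideanSpace ℝ (Fin n)) ∈ K) (hstar : ∀ t ∈ Icc (0 : ℝ) 1, ∀ x ∈ K, t • x ∈ K)
    (hK' : IsCompact K') {v : EuclideanSpace ℝ (Fin n) → ℝ} (hv : ContDiff ℝ (⊤ : ℕ∞) v)
    {V : Set (EuclideanSpace ℝ (Fin n))} (hV : IsOpen V) (hKV : K ⊆ V)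
    (hvlap : ∀ x ∈ V, lap v x = 0) {ε : ℝ} (hε : 0 < ε) :
    ∃ f : EuclideanSpace ℝ (Fin n) → ℝ, ContDiff ℝ (⊤ : ℕ∞) f ∧
      (∃ W, IsOpen W ∧ K' ⊆ W ∧ ∀ x ∈ W, lap f x = 0) ∧ ∀ x ∈ K, |f x - v x| ≤ ε := by
  have : CompactSpace K := isCompact_iff_compactSpace.1 hK
  let vK : C(K, ℝ) := ⟨fun x => v x, hv.continuous.comp continuous_subtype_val⟩
  suffices h : vK ∈ closure (harmonicRestrictions K K' : Set C(K, ℝ)) by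
    obtain ⟨g, ⟨f, hf, hW, hgf⟩, hg⟩ := Metric.mem_closure_iff.1 h ε hε
    refine ⟨f, hf, hW, fun x hx => ?_⟩
    have h1 : |vK ⟨x, hx⟩ - g ⟨x, hx⟩| ≤ dist vK g := by
      rw [← Real.dist_eq]; exact ContinuousMap.dist_apply_le_dist _
    rw [hgf, abs_sub_comm] at h1
    exact h1.trans hg.le
  by_contra hcon
  obtain ⟨Λ, s, hs, hvs⟩ := geometric_hahn_banach_closed_point
    (harmonicRestrictions K K').convex.closure isClosed_closure hcon
  have hΛ : ∀ g ∈ harmonicRestrictions K K', Λ g = 0 := by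
    intro g hg
    by_contra hne
    have h1 := hs _ (subset_closure ((harmonicRestrictions K K').smul_mem (s / Λ g) hg))
    rw [map_smul, smul_eq_mul, div_mul_cancel₀ _ hne] at h1
    exact lt_irrefl _ h1
  have hs0 : 0 < s := by simpa using hs 0 (subset_closure (Submodule.zero_mem _))
  obtain ⟨χ, hχ, hχc, -, V', hV', hKV', hχ1⟩ := exists_cutoff hK hV hKV
  have hφ : ContDiff ℝ (⊤ : ℕ∞) fun x => χ x * v x := hχ.mul hv
  have hφc : HasCompactSupport fun x => χ x * v x := hχc.mul_right
  set ψ := lap fun x => χ x * v x with hψ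
  have hψ0 : ∀ x ∈ V ∩ V', ψ x = 0 := by
    intro x hx
    rw [hψ, lap_congr_of_isOpen (hV.inter hV') (g := v) (fun z hz => by simp [hχ1 hz.2]) hx,
      hvlap x hx.1]
  have hψsm : ContDiff ℝ (⊤ : ℕ∞) ψ := lap_contDiff hφ
  have hψc : HasCompactSupport ψ := lap_hasCompactSupport hφc
  have hKS : K ⊆ (tsupport ψ)ᶜ := by
    intro x hx
    rw [mem_compl_iff, notMem_tsupport_iff_eventuallyEq]
    exact Filter.eventually_of_mem ((hV.inter hV').mem_nhds ⟨hKV hx, hKV' hx⟩) hψ0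
  obtain ⟨ρ, hρ, hρS⟩ := hK.exists_thickening_subset_open (isClosed_tsupport ψ).isOpen_compl hKS
  have hfar : ∀ y ∈ tsupport ψ, ∀ x ∈ K, ρ ≤ ‖x - y‖ := by
    intro y hy x hx
    by_contra hlt
    refine hρS (Metric.mem_thickening_iff.2 ⟨x, hx, ?_⟩) hy
    rw [dist_comm, dist_eq_norm]; exact not_le.1 hlt
  have hr : 0 < ρ / 2 := by positivity
  have hTc : Continuous fun y => charge K hr 1 y := by
    refine ContinuousMap.continuous_of_continuous_uncurry _ ?_
    exact (gcut_contDiff hr).continuous.comp (by fun_prop)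
  have hint : Integrable fun y => ψ y • charge K hr 1 y :=
    (hψsm.continuous.smul hTc).integrable_of_hasCompactSupport hψc.smul_right
  have hrep : gconst n • vK = ∫ y, ψ y • charge K hr 1 y := by
    ext x
    rw [ContinuousMap.integral_apply hint]
    have h1 := cv_gam_lap hn hφ hφc x
    rw [cv_comm, cv_apply, hχ1 (hKV' x.2)] at h1
    simp only [Pi.one_apply, one_mul] at h1
    change gconst n * v x = _
    rw [← h1]
    refine integral_congr_ae (Eventually.of_forall fun y => ?_)
    by_cases hy : y ∈ tsupport ψ
    · change ψ y * _ = ψ y * gcut (ρ / 2) ((1 : ℝ) • (x : EuclideanSpace ℝ (Fin n)) - y)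
      rw [one_smul, gcut_eq hr]
      have := hfar y hy x x.2
      linarith
    · change ψ y * _ = ψ y * _
      rw [image_eq_zero_of_notMem_tsupport hy, zero_mul, zero_mul]
  have hΛv : Λ (gconst n • vK) = 0 := by
    rw [hrep, ← Λ.integral_comp_comm hint]
    refine integral_eq_zero_of_ae (Eventually.of_forall fun y => ?_)
    change Λ (ψ y • charge K hr 1 y) = 0
    by_cases hy : y ∈ tsupport ψ
    · rw [map_smul, dual_charge_eq_zero h0 hstar hK' Λ hΛ hr, smul_zero]
      intro x hx
      have := hfar y hy x hx
      linarith
    · rw [image_eq_zero_of_notMem_tsupport hy, zero_smul, map_zero]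
  rw [map_smul, smul_eq_mul, mul_eq_zero] at hΛv
  have := hΛv.resolve_left (gconst_neg hn).ne
  linarith

end Runge

/-! ### The Poisson equation on star-shaped open sets -/

section Poisson

open Set Filter Topology MeasureTheory

variable {n : ℕ}

lemma contDiff_mul_of_tsupport {E : Type*} [NormedAddCommGroup E] [NormedSpace ℝ E] {U : Set E}
    (hU : IsOpen U) {χ g : E → ℝ} (hχ : ContDiff ℝ (⊤ : ℕ∞) χ) (hs : tsupport χ ⊆ U)
    (hg : ContDiffOn ℝ (⊤ : ℕ∞) g U) : ContDiff ℝ (⊤ : ℕ∞) fun x => χ x * g x := by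
  refine contDiff_iff_contDiffAt.2 fun x => ?_
  by_cases hx : x ∈ U
  · exact hχ.contDiffAt.mul (hg.contDiffAt (hU.mem_nhds hx))
  · have h0 : χ =ᶠ[𝓝 x] 0 := notMem_tsupport_iff_eventuallyEq.1 fun h => hx (hs h)
    refine (contDiffAt_const (c := (0 : ℝ))).congr_of_eventuallyEq ?_
    filter_upwards [h0] with y hy
    simp [hy]

lemma starHull_isCompact {E : Type*} [NormedAddCommGroup E] [NormedSpace ℝ E] {K : Set E}
    (hK : IsCompact K) : IsCompact ((fun p : ℝ × E => p.1 • p.2) '' (Icc 0 1 ×ˢ K)) :=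
  (isCompact_Icc.prod hK).image (by fun_prop)

lemma exists_star_exhaustion {U : Set (EuclideanSpace ℝ (Fin n))} (hU : IsOpen U)
    (h0 : (0 : EuclideanSpace ℝ (Fin n)) ∈ U) (hstar : StarConvex ℝ 0 U) :
    ∃ K : ℕ → Set (EuclideanSpace ℝ (Fin n)), (∀ j, IsCompact (K j)) ∧ (∀ j, K j ⊆ U) ∧
      (∀ j, (0 : EuclideanSpace ℝ (Fin n)) ∈ K j) ∧
      (∀ j, ∀ t ∈ Icc (0 : ℝ) 1, ∀ x ∈ K j, t • x ∈ K j) ∧ Monotone K ∧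
      ∀ x ∈ U, ∃ j, K j ∈ 𝓝 x := by
  have : LocallyCompactSpace U := hU.locallyCompactSpace
  let e : CompactExhaustion U := default
  have hcomp : ∀ j, IsCompact (insert 0 (Subtype.val '' e j)) := fun j =>
    ((e.isCompact j).image continuous_subtype_val).insert 0
  have hsubU : ∀ j, insert 0 (Subtype.val '' e j) ⊆ U := by
    intro j
    refine insert_subset h0 ?_
    rintro _ ⟨x, -, rfl⟩
    exact x.2
  let K : ℕ → Set (EuclideanSpace ℝ (Fin n)) := fun j =>
    (fun p : ℝ × EuclideanSpace ℝ (Fin n) => p.1 • p.2) ''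
      (Icc 0 1 ×ˢ insert 0 (Subtype.val '' e j))
  have hsubK : ∀ j, insert 0 (Subtype.val '' e j) ⊆ K j := fun j x hx =>
    ⟨(1, x), ⟨by simp, hx⟩, by simp⟩
  refine ⟨K, fun j => starHull_isCompact (hcomp j), ?_, ?_, ?_, ?_, ?_⟩
  · rintro j _ ⟨⟨t, x⟩, ⟨ht, hx⟩, rfl⟩
    exact hstar.smul_mem (hsubU j hx) ht.1 ht.2
  · exact fun j => hsubK j (mem_insert _ _)
  · rintro j t ht _ ⟨⟨s, x⟩, ⟨hs, hx⟩, rfl⟩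
    refine ⟨(t * s, x), ⟨⟨mul_nonneg ht.1 hs.1, mul_le_one₀ ht.2 hs.1 hs.2⟩, hx⟩, ?_⟩
    simp [mul_smul]
  · intro i j hij
    exact image_mono (prod_mono_right (insert_subset_insert (image_mono (e.subset hij))))
  · intro x hx
    obtain ⟨j, hj⟩ := e.exists_mem ⟨x, hx⟩
    refine ⟨j + 1, ?_⟩
    have h1 : e (j + 1) ∈ 𝓝 (⟨x, hx⟩ : U) := mem_interior_iff_mem_nhds.1 (e.subset_interior_succ j hj)
    have h2 := hU.isOpenEmbedding_subtypeVal.image_mem_nhds.2 h1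
    exact mem_of_superset h2 ((subset_insert _ _).trans (hsubK _))

/-- Near a compact set the Poisson equation is solved by a Newtonian potential. -/
lemma poisson_local (hn : 3 ≤ n) {U K : Set (EuclideanSpace ℝ (Fin n))} (hU : IsOpen U)
    (hK : IsCompact K) (hKU : K ⊆ U) {g : EuclideanSpace ℝ (Fin n) → ℝ}
    (hg : ContDiffOn ℝ (⊤ : ℕ∞) g U) :
    ∃ w : EuclideanSpace ℝ (Fin n) → ℝ, ContDiff ℝ (⊤ : ℕ∞) w ∧
      ∃ V, IsOpen V ∧ K ⊆ V ∧ ∀ x ∈ V, lap w x = g x := by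
  obtain ⟨χ, hχ, hχc, hχU, V, hV, hKV, hχ1⟩ := exists_cutoff hK hU hKU
  have hφ : ContDiff ℝ (⊤ : ℕ∞) fun x => χ x * g x := contDiff_mul_of_tsupport hU hχ hχU hg
  have hφc : HasCompactSupport fun x => χ x * g x := hχc.mul_right
  have hI := gam_zero_locallyIntegrable (n := n) hn
  have hcv := cv_contDiff_right hI hφ hφc
  refine ⟨fun x => (gconst n)⁻¹ * cv (gam 0) (fun x => χ x * g x) x, contDiff_const.mul hcv,
    V, hV, hKV, fun x hx => ?_⟩
  rw [lap_const_mul hcv, lap_cv_right hI hφ hφc, cv_gam_lap hn hφ hφc, hχ1 hx, ← mul_assoc,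
    inv_mul_cancel₀ (gconst_neg hn).ne]
  simp

/-- **Mittag-Leffler argument.** The Poisson equation `Δu = g` is solvable on a star-shaped open
set: local solutions on an exhaustion are corrected by globally defined functions, harmonic on the
next step, which Runge's theorem provides, so as to make them converge. -/
theorem poisson_zero (hn : 3 ≤ n) {U : Set (EuclideanSpace ℝ (Fin n))} (hU : IsOpen U)
    (h0 : (0 : EuclideanSpace ℝ (Fin n)) ∈ U) (hstar : StarConvex ℝ 0 U)
    {g : EuclideanSpace ℝ (Fin n) → ℝ} (hg : ContDiffOn ℝ (⊤ : ℕ∞) g U) :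
    ∃ u : EuclideanSpace ℝ (Fin n) → ℝ, ContDiffOn ℝ (⊤ : ℕ∞) u U ∧ ∀ x ∈ U, lap u x = g x := by
  obtain ⟨K, hKc, hKU, hK0, hKs, hKm, hKn⟩ := exists_star_exhaustion hU h0 hstar
  let P : ℕ → (EuclideanSpace ℝ (Fin n) → ℝ) → Prop := fun j u => ContDiff ℝ (⊤ : ℕ∞) u ∧
    ∃ V, IsOpen V ∧ K j ⊆ V ∧ ∀ x ∈ V, lap u x = g x
  have hstep : ∀ j (u : {u // P j u}), ∃ u' : {u' // P (j + 1) u'},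
      ∀ x ∈ K j, |u'.1 x - u.1 x| ≤ 1 * (1 / 2 : ℝ) ^ j := by
    rintro j ⟨u, hu, V, hV, hKV, huV⟩
    obtain ⟨w, hw, V', hV', hKV', hwV⟩ := poisson_local hn hU (hKc (j + 1)) (hKU _) hg
    obtain ⟨f, hf, ⟨W, hW, hKW, hfW⟩, hfv⟩ := runge hn (hKc j) (hK0 j) (hKs j) (hKc (j + 1))
      (hu.sub hw) (hV.inter hV') (subset_inter hKV ((hKm j.le_succ).trans hKV'))
      (fun x hx => by rw [lap_sub hu hw, huV x hx.1, hwV x hx.2, sub_self])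
      (show (0 : ℝ) < 1 * (1 / 2) ^ j by positivity)
    refine ⟨⟨fun x => w x + f x, hw.add hf, V' ∩ W, hV'.inter hW, subset_inter hKV' hKW,
      fun x hx => ?_⟩, fun x hx => ?_⟩
    · rw [lap_add hw.contDiffAt hf.contDiffAt, hwV x hx.1, hfW x hx.2, add_zero]
    · convert hfv x hx using 2
      simp only; ring
  choose step hstep using hstep
  let S : ∀ j, {u // P j u} := fun j => Nat.rec
    ⟨_, (poisson_local hn hU (hKc 0) (hKU 0) hg).choose_spec⟩ (fun j u => step j u) j
  let u : ℕ → EuclideanSpace ℝ (Fin n) → ℝ := fun j => (S j).1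
  have hu : ∀ j, ContDiff ℝ (⊤ : ℕ∞) (u j) := fun j => (S j).2.1
  have hlap : ∀ j, ∀ x ∈ K j, lap (u j) x = g x := by
    intro j x hx
    obtain ⟨V, -, h1, h2⟩ := (S j).2.2
    exact h2 x (h1 hx)
  have hd : ∀ J, ∀ x ∈ K J, ∀ k, dist (u (J + k) x) (u (J + (k + 1)) x) ≤
      (1 / 2 : ℝ) ^ J * (1 / 2 : ℝ) ^ k := by
    intro J x hx k
    have := hstep (J + k) (S (J + k)) x (hKm (Nat.le_add_right J k) hx)
    rw [one_mul, pow_add] at this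
    rw [dist_comm, Real.dist_eq]
    exact this
  have hlim : ∀ x, ∃ l, x ∈ U → Tendsto (fun j => u j x) atTop (𝓝 l) := by
    intro x
    by_cases hx : x ∈ U
    · obtain ⟨J, hJ⟩ := hKn x hx
      obtain ⟨l, hl⟩ := cauchySeq_tendsto_of_complete
        (cauchySeq_of_le_geometric _ _ (by norm_num) (hd J x (mem_of_mem_nhds hJ)))
      refine ⟨l, fun _ => ?_⟩
      rw [← tendsto_add_atTop_iff_nat J]
      simpa only [add_comm] using hl
    · exact ⟨0, fun h => absurd h hx⟩
  choose l hl using hlim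
  have key : ∀ x ∈ U, ContDiffAt ℝ (⊤ : ℕ∞) l x ∧ lap l x = g x := by
    intro x hx
    obtain ⟨J, hJ⟩ := hKn x hx
    obtain ⟨r, hr, hrJ⟩ := Metric.mem_nhds_iff.1 hJ
    have hball : Metric.ball x (4 * (r / 4)) ⊆ K J := by
      rwa [show 4 * (r / 4) = r by ring]
    have hρ : 0 < r / 4 := by positivity
    obtain ⟨L, hL, hLl⟩ := weyl hn (h := fun k y => u (J + k) y - u J y)
      (fun k => (hu _).sub (hu _)) hρ
      (fun k y hy => by
        rw [lap_sub (hu _) (hu _), hlap _ y (hKm (Nat.le_add_right J k) (hball hy)),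
          hlap _ y (hball hy), sub_self])
      (l := fun y => l y - u J y) (by
        rw [Metric.tendstoUniformlyOn_iff]
        intro ε hε
        have ht : Tendsto (fun k : ℕ => (1 / 2 : ℝ) ^ J * (1 / 2 : ℝ) ^ k / (1 - 1 / 2)) atTop (𝓝 0) := by
          have := (((tendsto_pow_atTop_nhds_zero_of_lt_one (r := (1 / 2 : ℝ)) (by norm_num)
            (by norm_num)).const_mul ((1 / 2 : ℝ) ^ J)).div_const (1 - 1 / 2))
          simpa using this
        filter_upwards [ht.eventually (gt_mem_nhds hε)] with k hk y hy
        have hyJ := hball hy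
        have h1 : Tendsto (fun k => u (J + k) y) atTop (𝓝 (l y)) := by
          have := (tendsto_add_atTop_iff_nat J).2 (hl y (hKU J hyJ))
          simpa only [add_comm] using this
        have h2 := dist_le_of_le_geometric_of_tendsto _ _ (by norm_num) (hd J y hyJ) h1 k
        rw [dist_sub_right, dist_comm]
        exact h2.trans_lt hk)
    have hev : l =ᶠ[𝓝 x] fun y => L y + u J y := by
      filter_upwards [Metric.ball_mem_nhds x (show 0 < 2 * (r / 4) by positivity)] with y hy
      rw [(hLl y hy).1]; ring
    refine ⟨(hL.add (hu J)).contDiffAt.congr_of_eventuallyEq hev, ?_⟩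
    rw [lap_congr hev, lap_add hL.contDiffAt (hu J).contDiffAt, hlap J x (mem_of_mem_nhds hJ),
      (hLl x (Metric.mem_ball_self (by positivity))).2, zero_add]
  exact ⟨l, fun x hx => (key x hx).1.contDiffWithinAt, fun x hx => (key x hx).2⟩

theorem poisson (hn : 3 ≤ n) {U : Set (EuclideanSpace ℝ (Fin n))} (hU : IsOpen U)
    {c : EuclideanSpace ℝ (Fin n)} (hc : c ∈ U) (hstar : StarConvex ℝ c U)
    {g : EuclideanSpace ℝ (Fin n) → ℝ} (hg : ContDiffOn ℝ (⊤ : ℕ∞) g U) :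
    ∃ u : EuclideanSpace ℝ (Fin n) → ℝ, ContDiffOn ℝ (⊤ : ℕ∞) u U ∧ ∀ x ∈ U, lap u x = g x := by
  have hcont : Continuous fun x : EuclideanSpace ℝ (Fin n) => x + c := by fun_prop
  have hsm : ContDiff ℝ (⊤ : ℕ∞) fun x : EuclideanSpace ℝ (Fin n) => x + c := by fun_prop
  have hsm' : ContDiff ℝ (⊤ : ℕ∞) fun x : EuclideanSpace ℝ (Fin n) => x - c := by fun_prop
  obtain ⟨u, hu, hlu⟩ := poisson_zero hn (U := (fun x => x + c) ⁻¹' U) (hU.preimage hcont)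
    (by simpa using hc)
    (by
      intro x hx a b ha hb hab
      have := hstar hx ha hb hab
      simp only [mem_preimage, smul_zero, zero_add, smul_add] at this ⊢
      rwa [show b • x + c = a • c + (b • x + b • c) by
        rw [add_left_comm, ← add_smul, hab, one_smul]])
    (g := fun x => g (x + c)) (hg.comp hsm.contDiffOn fun x hx => hx)
  have hmaps : MapsTo (fun x => x - c) U ((fun x => x + c) ⁻¹' U) := fun x hx => by simpa using hx
  refine ⟨fun x => u (x - c), hu.comp hsm'.contDiffOn hmaps, fun x hx => ?_⟩
  have htr : ∀ (f : EuclideanSpace ℝ (Fin n) → ℝ) (v : EuclideanSpace ℝ (Fin n)),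
      pd (fun x => f (x - c)) v = fun x => pd f v (x - c) := by
    intro f v
    ext x
    unfold pd
    rw [fderiv_comp_sub]
  have h1 := hlu (x - c) (hmaps hx)
  rw [sub_add_cancel] at h1
  rw [← h1]
  simp only [lap, htr]

end Poisson

/-! ### Weighted integrals along rays -/

section RadialIntegral

open Set Filter Topology MeasureTheory

variable {n : ℕ}

/-- The weighted integral `∫₀¹ t ^ N f(c + t (x - c)) dt` of `f` along the segment from `c`
to `x`. -/
noncomputable def rad (N : ℕ) (c : EuclideanSpace ℝ (Fin n)) (f : EuclideanSpace ℝ (Fin n) → ℝ)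
    (x : EuclideanSpace ℝ (Fin n)) : ℝ :=
  ∫ t in (0 : ℝ)..1, t ^ N * f (c + t • (x - c))

lemma rad_hasFDerivAt (N : ℕ) (c : EuclideanSpace ℝ (Fin n)) {f : EuclideanSpace ℝ (Fin n) → ℝ}
    (hf : ContDiff ℝ (⊤ : ℕ∞) f) (x : EuclideanSpace ℝ (Fin n)) :
    HasFDerivAt (rad N c f) (∫ t in (0 : ℝ)..1, t ^ (N + 1) • fderiv ℝ f (c + t • (x - c))) x := by
  have hfd : Continuous (fderiv ℝ f) := hf.continuous_fderiv (by simp)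
  have hfc := hf.continuous
  let F' : EuclideanSpace ℝ (Fin n) → ℝ → (EuclideanSpace ℝ (Fin n) →L[ℝ] ℝ) := fun x t =>
    t ^ (N + 1) • fderiv ℝ f (c + t • (x - c))
  have hF' : Continuous fun p : EuclideanSpace ℝ (Fin n) × ℝ => F' p.1 p.2 := by
    simp only [F']; fun_prop
  obtain ⟨C, hC⟩ := ((isCompact_closedBall x 1).prod (isCompact_Icc (a := (0 : ℝ)) (b := 1))).exists_bound_of_continuousOn
    hF'.continuousOn
  refine intervalIntegral.hasFDerivAt_integral_of_dominated_of_fderiv_le (F' := F')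
    (bound := fun _ => C) (Metric.closedBall_mem_nhds x one_pos) ?_ ?_ ?_ ?_ ?_ ?_
  · refine Eventually.of_forall fun y => Continuous.aestronglyMeasurable ?_
    fun_prop
  · apply Continuous.intervalIntegrable
    fun_prop
  · refine Continuous.aestronglyMeasurable ?_
    exact hF'.comp (by fun_prop : Continuous fun t : ℝ => (x, t))
  · refine Eventually.of_forall fun t ht y hy => hC (y, t) ⟨hy, ?_⟩
    rw [uIoc_of_le zero_le_one] at ht
    exact ⟨ht.1.le, ht.2⟩
  · exact intervalIntegrable_const
  · refine Eventually.of_forall fun t _ y _ => ?_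
    have h1 : HasFDerivAt (fun y : EuclideanSpace ℝ (Fin n) => c + t • (y - c))
        (t • ContinuousLinearMap.id ℝ _) y :=
      (((hasFDerivAt_id y).sub_const c).const_smul t).const_add c
    have h2 := ((hf.dAt _).hasFDerivAt.comp y h1).const_mul (t ^ N)
    refine h2.congr_fderiv ?_
    ext v
    simp [F']; ring

lemma pd_rad_global (N : ℕ) (c : EuclideanSpace ℝ (Fin n)) {f : EuclideanSpace ℝ (Fin n) → ℝ}
    (hf : ContDiff ℝ (⊤ : ℕ∞) f) (v x : EuclideanSpace ℝ (Fin n)) :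
    pd (rad N c f) v x = rad (N + 1) c (pd f v) x := by
  have hfd : Continuous (fderiv ℝ f) := hf.continuous_fderiv (by simp)
  unfold pd
  rw [(rad_hasFDerivAt N c hf x).fderiv, ContinuousLinearMap.intervalIntegral_apply]
  · rfl
  · apply Continuous.intervalIntegrable
    fun_prop

lemma rad_contDiff_global (N : ℕ) (c : EuclideanSpace ℝ (Fin n))
    {f : EuclideanSpace ℝ (Fin n) → ℝ} (hf : ContDiff ℝ (⊤ : ℕ∞) f) :
    ContDiff ℝ (⊤ : ℕ∞) (rad N c f) := by
  rw [contDiff_infty]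
  intro k
  induction k generalizing N f with
  | zero =>
    exact contDiff_zero.2 (continuous_iff_continuousAt.2 fun x =>
      (rad_hasFDerivAt N c hf x).continuousAt)
  | succ k ih =>
    have := (contDiff_succ_iff_fderiv_apply (𝕜 := ℝ) (n := (k : WithTop ℕ∞)) (f := rad N c f)).2
      ⟨fun x => (rad_hasFDerivAt N c hf x).differentiableAt, by simp, fun v => by
        have h1 : (fun x => fderiv ℝ (rad N c f) x v) = rad (N + 1) c (pd f v) :=
          funext fun x => pd_rad_global N c hf v x
        rw [h1]
        exact ih (N + 1) (pd_contDiff hf v)⟩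
    exact_mod_cast this

lemma rad_local {U : Set (EuclideanSpace ℝ (Fin n))} (hU : IsOpen U)
    {c : EuclideanSpace ℝ (Fin n)} (hstar : StarConvex ℝ c U)
    {f : EuclideanSpace ℝ (Fin n) → ℝ} (hf : ContDiffOn ℝ (⊤ : ℕ∞) f U)
    {x : EuclideanSpace ℝ (Fin n)} (hx : x ∈ U) :
    ∃ g : EuclideanSpace ℝ (Fin n) → ℝ, ContDiff ℝ (⊤ : ℕ∞) g ∧
      ∀ᶠ y in 𝓝 x, ∀ t ∈ Icc (0 : ℝ) 1, g =ᶠ[𝓝 (c + t • (y - c))] f := by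
  obtain ⟨r, hr, hrU⟩ := Metric.nhds_basis_closedBall.mem_iff.1 (hU.mem_nhds hx)
  let H := (fun p : ℝ × EuclideanSpace ℝ (Fin n) => c + p.1 • (p.2 - c)) ''
    (Icc 0 1 ×ˢ Metric.closedBall x r)
  have hH : IsCompact H := (isCompact_Icc.prod (isCompact_closedBall x r)).image (by fun_prop)
  have hHU : H ⊆ U := by
    rintro _ ⟨⟨t, y⟩, ⟨ht, hy⟩, rfl⟩
    exact hstar.add_smul_sub_mem (hrU hy) ht.1 ht.2
  obtain ⟨χ, hχ, -, hχU, V, hV, hHV, hχ1⟩ := exists_cutoff hH hU hHU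
  refine ⟨fun x => χ x * f x, contDiff_mul_of_tsupport hU hχ hχU hf, ?_⟩
  filter_upwards [Metric.closedBall_mem_nhds x hr] with y hy t ht
  filter_upwards [hV.mem_nhds (hHV ⟨(t, y), ⟨ht, hy⟩, rfl⟩)] with z hz
  simp [hχ1 hz]

lemma rad_congr {N : ℕ} {c x : EuclideanSpace ℝ (Fin n)} {f g : EuclideanSpace ℝ (Fin n) → ℝ}
    (h : ∀ t ∈ Icc (0 : ℝ) 1, f (c + t • (x - c)) = g (c + t • (x - c))) :
    rad N c f x = rad N c g x := by
  refine intervalIntegral.integral_congr fun t ht => ?_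
  rw [uIcc_of_le zero_le_one] at ht
  simp only [h t ht]

lemma rad_contDiffOn (N : ℕ) {U : Set (EuclideanSpace ℝ (Fin n))} (hU : IsOpen U)
    {c : EuclideanSpace ℝ (Fin n)} (hstar : StarConvex ℝ c U)
    {f : EuclideanSpace ℝ (Fin n) → ℝ} (hf : ContDiffOn ℝ (⊤ : ℕ∞) f U) :
    ContDiffOn ℝ (⊤ : ℕ∞) (rad N c f) U := by
  intro x hx
  obtain ⟨g, hg, hgf⟩ := rad_local hU hstar hf hx
  refine ((rad_contDiff_global N c hg).contDiffAt.congr_of_eventuallyEq ?_).contDiffWithinAt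
  filter_upwards [hgf] with y hy
  exact rad_congr fun t ht => (hy t ht).eq_of_nhds.symm

lemma pd_rad (N : ℕ) {U : Set (EuclideanSpace ℝ (Fin n))} (hU : IsOpen U)
    {c : EuclideanSpace ℝ (Fin n)} (hstar : StarConvex ℝ c U)
    {f : EuclideanSpace ℝ (Fin n) → ℝ} (hf : ContDiffOn ℝ (⊤ : ℕ∞) f U)
    (v : EuclideanSpace ℝ (Fin n)) {x : EuclideanSpace ℝ (Fin n)} (hx : x ∈ U) :
    pd (rad N c f) v x = rad (N + 1) c (pd f v) x := by
  obtain ⟨g, hg, hgf⟩ := rad_local hU hstar hf hx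
  have h1 : rad N c f =ᶠ[𝓝 x] rad N c g := by
    filter_upwards [hgf] with y hy
    exact rad_congr fun t ht => (hy t ht).eq_of_nhds.symm
  rw [pd_congr h1, pd_rad_global N c hg]
  exact rad_congr fun t ht => pd_congr (hgf.self_of_nhds t ht) v

lemma eq_sum_single (y : EuclideanSpace ℝ (Fin n)) :
    y = ∑ a, y a • EuclideanSpace.single a (1 : ℝ) := by
  have := (EuclideanSpace.basisFun (Fin n) ℝ).sum_repr y
  simpa using this.symm

lemma pd_eq_sum (f : EuclideanSpace ℝ (Fin n) → ℝ) (y x : EuclideanSpace ℝ (Fin n)) :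
    pd f y x = ∑ a, y a * pd f (EuclideanSpace.single a 1) x := by
  unfold pd
  conv_lhs => rw [eq_sum_single y]
  simp [map_sum]

/-- Euler's identity for `rad`: `(N + 1) R + (x - c) · ∇R = f`, by integrating the derivative of
`t ↦ t ^ (N + 1) f(c + t (x - c))`. -/
lemma rad_euler (N : ℕ) {U : Set (EuclideanSpace ℝ (Fin n))} (hU : IsOpen U)
    {c : EuclideanSpace ℝ (Fin n)} (hstar : StarConvex ℝ c U)
    {f : EuclideanSpace ℝ (Fin n) → ℝ} (hf : ContDiffOn ℝ (⊤ : ℕ∞) f U)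
    {x : EuclideanSpace ℝ (Fin n)} (hx : x ∈ U) :
    (N + 1) * rad N c f x + ∑ a, (x - c) a * pd (rad N c f) (EuclideanSpace.single a 1) x = f x := by
  rw [← pd_eq_sum, pd_rad N hU hstar hf _ hx]
  obtain ⟨g, hg, hgf⟩ := rad_local hU hstar hf hx
  have hgf' := hgf.self_of_nhds
  rw [rad_congr fun t ht => (hgf' t ht).eq_of_nhds.symm,
    rad_congr fun t ht => pd_congr (hgf' t ht).symm (x - c)]
  have h1 : f x = g x := by
    have := (hgf' 1 (by simp)).eq_of_nhds
    simpa using this.symm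
  have hgc := hg.continuous
  have hpc := (pd_contDiff hg (x - c)).continuous
  have hd : ∀ t : ℝ, HasDerivAt (fun t : ℝ => t ^ (N + 1) * g (c + t • (x - c)))
      ((N + 1) * (t ^ N * g (c + t • (x - c))) + t ^ (N + 1) * pd g (x - c) (c + t • (x - c))) t := by
    intro t
    have h2 : HasDerivAt (fun t : ℝ => c + t • (x - c)) (x - c) t := by
      simpa using ((hasDerivAt_id t).smul_const (x - c)).const_add c
    have h3 := (hg.dAt (c + t • (x - c))).hasFDerivAt.comp_hasDerivAt t h2
    have h4 := (hasDerivAt_pow (N + 1) t).mul h3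
    have h5 : HasDerivAt (fun t : ℝ => t ^ (N + 1) * g (c + t • (x - c))) _ t := h4
    refine h5.congr_deriv ?_
    simp [pd]; ring
  have hint := intervalIntegral.integral_eq_sub_of_hasDerivAt (a := 0) (b := 1) (fun t _ => hd t)
    (by apply Continuous.intervalIntegrable; fun_prop)
  rw [intervalIntegral.integral_add (by apply Continuous.intervalIntegrable; fun_prop)
    (by apply Continuous.intervalIntegrable; fun_prop), intervalIntegral.integral_const_mul] at hint
  unfold rad
  rw [hint, h1]
  simp

end RadialIntegral

/-! ### Algebra of antisymmetric arrays -/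

section Antisymmetric

open Finset

variable {n k : ℕ}

/-- An array of components is antisymmetric if permuting its indices multiplies it by the sign. -/
def IsAlt (A : (Fin k → Fin n) → ℝ) : Prop :=
  ∀ (i : Fin k → Fin n) (σ : Equiv.Perm (Fin k)), A (i ∘ σ) = ((Equiv.Perm.sign σ : ℤ) : ℝ) * A i

/-- The alternating sum `∑ₘ (-1)ᵐ T_{j_m}(j₀ … ĵ_m … j_k)`, which underlies both the exterior
derivative (`T_a = ∂_a F`) and the exterior product with a vector `y` (`T_a = y_a F`). -/
def altSum (T : Fin n → (Fin k → Fin n) → ℝ) (j : Fin (k + 1) → Fin n) : ℝ :=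
  ∑ m : Fin (k + 1), (-1 : ℝ) ^ (m : ℕ) * T (j m) (j ∘ m.succAbove)

lemma altSum_cons (T : Fin n → (Fin (k + 1) → Fin n) → ℝ) (a : Fin n) (i : Fin (k + 1) → Fin n) :
    altSum T (Fin.cons a i) = T a i -
      ∑ p : Fin (k + 1), (-1 : ℝ) ^ (p : ℕ) * T (i p) (Fin.cons a (i ∘ p.succAbove)) := by
  have h : ∀ p : Fin (k + 1), (Fin.cons a i : Fin (k + 2) → Fin n) ∘ p.succ.succAbove =
      Fin.cons a (i ∘ p.succAbove) := by
    intro p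
    ext q
    refine Fin.cases ?_ (fun q => ?_) q <;> simp
  have h0 : (Fin.cons a i : Fin (k + 2) → Fin n) ∘ (0 : Fin (k + 2)).succAbove = i := by
    ext q; simp
  rw [altSum, Fin.sum_univ_succ]
  simp only [h, h0, Fin.cons_zero, Fin.cons_succ, Fin.val_zero, Fin.val_succ, pow_zero, one_mul,
    pow_succ, mul_neg, mul_one, neg_mul, sum_neg_distrib, sub_eq_add_neg]

lemma IsAlt.eq_zero {A : (Fin k → Fin n) → ℝ} (hA : IsAlt A) {i : Fin k → Fin n} {a b : Fin k}
    (hab : a ≠ b) (h : i a = i b) : A i = 0 := by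
  have h1 := hA i (Equiv.swap a b)
  rw [Equiv.Perm.sign_swap hab] at h1
  have h2 : i ∘ Equiv.swap a b = i := by
    ext q
    simp only [Function.comp_apply, Equiv.swap_apply_def]
    split_ifs with h3 h4
    · rw [h3, h]
    · rw [h4, h]
    · rfl
  rw [h2] at h1
  push_cast at h1
  linarith

/-- The multilinear form on `ℝⁿ` with components `A`. -/
noncomputable def toMulti (A : (Fin k → Fin n) → ℝ) :
    MultilinearMap ℝ (fun _ : Fin k => Fin n → ℝ) ℝ :=
  ∑ i : Fin k → Fin n, A i •
    (MultilinearMap.mkPiAlgebra ℝ (Fin k) ℝ).compLinearMap fun r => LinearMap.proj (i r)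

lemma toMulti_apply (A : (Fin k → Fin n) → ℝ) (v : Fin k → Fin n → ℝ) :
    toMulti A v = ∑ i : Fin k → Fin n, A i * ∏ r, v r (i r) := by
  simp [toMulti]

/-- The alternating form on `ℝⁿ` whose values on the standard basis are the components of an
antisymmetric array. -/
noncomputable def toAlt {A : (Fin k → Fin n) → ℝ} (hA : IsAlt A) :
    (Fin n → ℝ) [⋀^Fin k]→ₗ[ℝ] ℝ where
  toMultilinearMap := toMulti A
  map_eq_zero_of_eq' := by
    intro v a b hv hab
    change toMulti A v = 0
    rw [toMulti_apply]
    set S := ∑ i : Fin k → Fin n, A i * ∏ r, v r (i r) with hS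
    -- exchanging `a` and `b` in the summation index changes the sign of the sum
    have h1 : S = -S := by
      conv_lhs => rw [hS]
      rw [← Equiv.sum_comp (Equiv.arrowCongr (Equiv.swap a b) (Equiv.refl (Fin n))), hS,
        ← sum_neg_distrib]
      refine sum_congr rfl fun i _ => ?_
      have e1 : Equiv.arrowCongr (Equiv.swap a b) (Equiv.refl (Fin n)) i = i ∘ Equiv.swap a b := by
        ext q; simp
      rw [e1, hA i, Equiv.Perm.sign_swap hab]
      have e2 : ∏ r, v r ((i ∘ Equiv.swap a b) r) = ∏ r, v r (i r) := by
        rw [← Equiv.prod_comp (Equiv.swap a b)]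
        refine prod_congr rfl fun r _ => ?_
        simp only [Function.comp_apply, Equiv.swap_apply_self]
        have e3 : v (Equiv.swap a b r) = v r := by
          rw [Equiv.swap_apply_def]
          split_ifs with h3 h4
          · rw [h3, hv]
          · rw [h4, hv]
          · rfl
        rw [e3]
      rw [e2]
      push_cast
      ring
    linarith

lemma toAlt_single {A : (Fin k → Fin n) → ℝ} (hA : IsAlt A) (i : Fin k → Fin n) :
    toAlt hA (fun r => Pi.single (i r) (1 : ℝ)) = A i := by
  change toMulti A _ = _
  rw [toMulti_apply, sum_eq_single i]
  · simp
  · intro i' _ hne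
    obtain ⟨r, hr⟩ := Function.ne_iff.1 hne
    rw [prod_eq_zero (mem_univ r), mul_zero]
    simp [hr]
  · simp

/-- The linear family of alternating forms with values `T a` on the basis vectors. -/
noncomputable def toAltFamily {T : Fin n → (Fin k → Fin n) → ℝ} (hT : ∀ a, IsAlt (T a)) :
    (Fin n → ℝ) →ₗ[ℝ] (Fin n → ℝ) [⋀^Fin k]→ₗ[ℝ] ℝ :=
  ∑ a, (LinearMap.proj a).smulRight (toAlt (hT a))

lemma toAltFamily_single {T : Fin n → (Fin k → Fin n) → ℝ} (hT : ∀ a, IsAlt (T a)) (a : Fin n) :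
    toAltFamily hT (Pi.single a 1) = toAlt (hT a) := by
  simp [toAltFamily, Pi.single_apply]

lemma alternatize_single {T : Fin n → (Fin k → Fin n) → ℝ} (hT : ∀ a, IsAlt (T a))
    (j : Fin (k + 1) → Fin n) :
    AlternatingMap.alternatizeUncurryFin (toAltFamily hT) (fun r => Pi.single (j r) (1 : ℝ)) =
      altSum T j := by
  rw [AlternatingMap.alternatizeUncurryFin_apply]
  refine sum_congr rfl fun m _ => ?_
  rw [toAltFamily_single]
  have := toAlt_single (hT (j m)) (j ∘ m.succAbove)
  rw [← this]
  simp only [zsmul_eq_mul]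
  push_cast
  rfl

lemma altSum_isAlt {T : Fin n → (Fin k → Fin n) → ℝ} (hT : ∀ a, IsAlt (T a)) :
    IsAlt (altSum T) := by
  intro j σ
  rw [← alternatize_single hT, ← alternatize_single hT]
  have := (AlternatingMap.alternatizeUncurryFin (toAltFamily hT)).map_perm
    (fun r => Pi.single (j r) (1 : ℝ)) σ
  rw [Units.smul_def, zsmul_eq_mul] at this
  exact this

/-- The algebraic form of `d ∘ d = 0`, deduced from the corresponding fact about
`AlternatingMap.alternatizeUncurryFin` by evaluating on basis vectors. -/
lemma altSum_altSum {T : Fin n → Fin n → (Fin k → Fin n) → ℝ} (hT : ∀ a b, IsAlt (T a b))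
    (hsymm : ∀ a b, T a b = T b a) (j : Fin (k + 2) → Fin n) :
    altSum (fun a => altSum (T a)) j = 0 := by
  let f : (Fin n → ℝ) →ₗ[ℝ] (Fin n → ℝ) →ₗ[ℝ] (Fin n → ℝ) [⋀^Fin k]→ₗ[ℝ] ℝ :=
    ∑ a, (LinearMap.proj a).smulRight (toAltFamily (hT a))
  have hf : ∀ a, f (Pi.single a 1) = toAltFamily (hT a) := by
    intro a
    simp [f, Pi.single_apply]
  have hfs : ∀ x y, f x y = f y x := by
    have : f = f.flip := by
      refine (Pi.basisFun ℝ (Fin n)).ext fun a => (Pi.basisFun ℝ (Fin n)).ext fun b => ?_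
      simp only [Pi.basisFun_apply, LinearMap.flip_apply, hf, toAltFamily_single]
      congr 1
      exact hsymm a b
    intro x y
    conv_lhs => rw [this]
    rfl
  have h0 := AlternatingMap.alternatizeUncurryFin_alternatizeUncurryFinLM_comp_of_symmetric hfs
  have h1 := congrArg (fun ω => ω (fun r => Pi.single (j r) (1 : ℝ))) h0
  simp only [AlternatingMap.zero_apply] at h1
  rw [← h1, AlternatingMap.alternatizeUncurryFin_apply]
  refine sum_congr rfl fun m _ => ?_
  rw [LinearMap.comp_apply, hf, AlternatingMap.alternatizeUncurryFinLM_apply]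
  have := alternatize_single (hT (j m)) (j ∘ m.succAbove)
  change (-1 : ℝ) ^ (m : ℕ) * altSum (T (j m)) (j ∘ m.succAbove) = _
  rw [← this]
  simp only [zsmul_eq_mul]
  push_cast
  rfl

/-- Moving the index `i_p` to the front produces the sign `(-1)ᵖ`. -/
lemma IsAlt.cons_succAbove {A : (Fin (k + 1) → Fin n) → ℝ} (hA : IsAlt A)
    (i : Fin (k + 1) → Fin n) (p : Fin (k + 1)) :
    (-1 : ℝ) ^ (p : ℕ) * A (Fin.cons (i p) (i ∘ p.succAbove)) = A i := by
  have h := hA (Fin.cons (i p) (i ∘ p.succAbove)) p.cycleRange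
  rw [Fin.cons_comp_cycleRange, Fin.sign_cycleRange] at h
  have h2 : p.insertNth (i p) (i ∘ p.succAbove) = i := Fin.insertNth_self_removeNth p i
  rw [h2] at h
  rw [h]
  push_cast
  rfl

lemma IsAlt.cons {A : (Fin (k + 1) → Fin n) → ℝ} (hA : IsAlt A) (a : Fin n) :
    IsAlt fun i : Fin k → Fin n => A (Fin.cons a i) := by
  intro i σ
  have h := hA (Fin.cons a i) (Equiv.Perm.decomposeFin.symm (0, σ))
  rw [Equiv.Perm.decomposeFin.symm_sign] at h
  have h2 : (Fin.cons a i : Fin (k + 1) → Fin n) ∘ Equiv.Perm.decomposeFin.symm (0, σ) =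
      Fin.cons a (i ∘ σ) := by
    ext q
    refine Fin.cases ?_ (fun q => ?_) q
    · simp
    · simp [Equiv.Perm.decomposeFin_symm_apply_succ]
  rw [h2] at h
  simpa using h

lemma IsAlt.cons_cons {A : (Fin (k + 2) → Fin n) → ℝ} (hA : IsAlt A) (a b : Fin n)
    (i : Fin k → Fin n) : A (Fin.cons b (Fin.cons a i)) = -A (Fin.cons a (Fin.cons b i)) := by
  have h := hA (Fin.cons a (Fin.cons b i)) (Equiv.swap 0 1)
  rw [Equiv.Perm.sign_swap (by simp)] at h
  have h2 : (Fin.cons a (Fin.cons b i) : Fin (k + 2) → Fin n) ∘ Equiv.swap 0 1 =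
      Fin.cons b (Fin.cons a i) := by
    ext q
    refine Fin.cases ?_ (fun q => ?_) q
    · simp
    · refine Fin.cases ?_ (fun q => ?_) q
      · simp
      · simp only [Function.comp_apply]
        rw [Equiv.swap_apply_of_ne_of_ne (Fin.succ_ne_zero _)
          (by simp [Fin.ext_iff])]
        simp
  rw [h2] at h
  rw [h]
  push_cast
  ring

lemma IsAlt.smul {A : (Fin k → Fin n) → ℝ} (hA : IsAlt A) (y : ℝ) : IsAlt fun i => y * A i := by
  intro i σ
  simp only [hA i σ]; ring

lemma IsAlt.sum {ι : Type*} {s : Finset ι} {A : ι → (Fin k → Fin n) → ℝ} (hA : ∀ a, IsAlt (A a)) :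
    IsAlt fun i => ∑ a ∈ s, A a i := by
  intro i σ
  simp only [fun a => hA a i σ, mul_sum]

/-- The antisymmetrization of an array. -/
noncomputable def antisymmetrize (A : (Fin k → Fin n) → ℝ) (i : Fin k → Fin n) : ℝ :=
  ∑ σ : Equiv.Perm (Fin k), (k.factorial : ℝ)⁻¹ * ((Equiv.Perm.sign σ : ℤ) : ℝ) * A (i ∘ σ)

lemma antisymmetrize_isAlt (A : (Fin k → Fin n) → ℝ) : IsAlt (antisymmetrize A) := by
  intro i τ
  unfold antisymmetrize
  rw [mul_sum, ← Equiv.sum_comp (Equiv.mulLeft τ)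
    (fun σ => ((Equiv.Perm.sign τ : ℤ) : ℝ) * ((k.factorial : ℝ)⁻¹ *
      ((Equiv.Perm.sign σ : ℤ) : ℝ) * A (i ∘ σ)))]
  refine sum_congr rfl fun σ _ => ?_
  have h1 : ((Equiv.Perm.sign τ : ℤ) : ℝ) * ((Equiv.Perm.sign τ : ℤ) : ℝ) = 1 := by
    rcases Int.units_eq_one_or (Equiv.Perm.sign τ) with h | h <;> simp [h]
  simp only [Equiv.coe_mulLeft, Equiv.Perm.sign_mul, Units.val_mul, Int.cast_mul,
    Equiv.Perm.coe_mul, Function.comp_assoc]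
  linear_combination (-(k.factorial : ℝ)⁻¹ * ((Equiv.Perm.sign σ : ℤ) : ℝ) * A (i ∘ τ ∘ σ)) * h1

lemma antisymmetrize_of_isAlt {A : (Fin k → Fin n) → ℝ} (hA : IsAlt A) : antisymmetrize A = A := by
  ext i
  have h : ∀ σ ∈ (univ : Finset (Equiv.Perm (Fin k))),
      (k.factorial : ℝ)⁻¹ * ((Equiv.Perm.sign σ : ℤ) : ℝ) * A (i ∘ σ) =
        (k.factorial : ℝ)⁻¹ * A i := by
    intro σ _
    rw [hA i σ]
    rcases Int.units_eq_one_or (Equiv.Perm.sign σ) with h | h <;> simp [h]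
  rw [antisymmetrize, sum_congr rfl h, sum_const, card_univ, Fintype.card_perm, Fintype.card_fin,
    nsmul_eq_mul, ← mul_assoc, mul_inv_cancel₀ (by positivity), one_mul]

end Antisymmetric

/-! ### Exterior derivative and divergence -/

section TensorCalculus

open Set Filter Topology MeasureTheory

variable {n k : ℕ} {U : Set (EuclideanSpace ℝ (Fin n))} {x : EuclideanSpace ℝ (Fin n)}

lemma dAt_of_contDiffOn (hU : IsOpen U) {f : EuclideanSpace ℝ (Fin n) → ℝ}
    (hf : ContDiffOn ℝ (⊤ : ℕ∞) f U) (hx : x ∈ U) : DifferentiableAt ℝ f x :=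
  (hf.contDiffAt (hU.mem_nhds hx)).differentiableAt (by simp)

lemma pd_congr_on (hU : IsOpen U) {f g : EuclideanSpace ℝ (Fin n) → ℝ}
    (h : ∀ y ∈ U, f y = g y) (hx : x ∈ U) (v : EuclideanSpace ℝ (Fin n)) :
    pd f v x = pd g v x :=
  pd_congr (EqOn.eventuallyEq_of_mem h (hU.mem_nhds hx)) v

lemma extDer_contDiffOn (hU : IsOpen U) {A : EuclideanSpace ℝ (Fin n) → (Fin k → Fin n) → ℝ}
    (hA : ∀ i, ContDiffOn ℝ (⊤ : ℕ∞) (fun y => A y i) U) (j : Fin (k + 1) → Fin n) :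
    ContDiffOn ℝ (⊤ : ℕ∞) (fun y => extDer n k A y j) U := by
  unfold extDer
  exact ContDiffOn.sum fun m _ => contDiffOn_const.mul (pd_contDiffOn hU (hA _) _)

lemma divg_contDiffOn (hU : IsOpen U) {A : EuclideanSpace ℝ (Fin n) → (Fin (k + 1) → Fin n) → ℝ}
    (hA : ∀ i, ContDiffOn ℝ (⊤ : ℕ∞) (fun y => A y i) U) (i : Fin k → Fin n) :
    ContDiffOn ℝ (⊤ : ℕ∞) (fun y => divg n k A y i) U := by
  unfold divg
  exact ContDiffOn.sum fun m _ => pd_contDiffOn hU (hA _) _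

lemma pd_extDer (hU : IsOpen U) {A : EuclideanSpace ℝ (Fin n) → (Fin k → Fin n) → ℝ}
    (hA : ∀ i, ContDiffOn ℝ (⊤ : ℕ∞) (fun y => A y i) U) (hx : x ∈ U)
    (v : EuclideanSpace ℝ (Fin n)) (j : Fin (k + 1) → Fin n) :
    pd (fun y => extDer n k A y j) v x = altSum (fun b l =>
      pd (pd (fun y => A y l) (EuclideanSpace.single b 1)) v x) j := by
  have hd : ∀ b l, DifferentiableAt ℝ (pd (fun y => A y l) (EuclideanSpace.single b 1)) x :=
    fun b l => dAt_of_contDiffOn hU (pd_contDiffOn hU (hA l) _) hx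
  unfold extDer altSum
  rw [pd_sum fun m _ => (hd _ _).const_mul _]
  exact Finset.sum_congr rfl fun m _ => pd_const_mul (hd _ _) _ _

lemma pd_divg (hU : IsOpen U) {A : EuclideanSpace ℝ (Fin n) → (Fin (k + 1) → Fin n) → ℝ}
    (hA : ∀ i, ContDiffOn ℝ (⊤ : ℕ∞) (fun y => A y i) U) (hx : x ∈ U)
    (v : EuclideanSpace ℝ (Fin n)) (i : Fin k → Fin n) :
    pd (fun y => divg n k A y i) v x = ∑ a,
      pd (pd (fun y => A y (Fin.cons a i)) (EuclideanSpace.single a 1)) v x := by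
  unfold divg
  exact pd_sum (fun a _ => dAt_of_contDiffOn hU (pd_contDiffOn hU (hA _) _) hx) _

lemma pd_isAlt (hU : IsOpen U) {A : EuclideanSpace ℝ (Fin n) → (Fin k → Fin n) → ℝ}
    (hA : ∀ i, ContDiffOn ℝ (⊤ : ℕ∞) (fun y => A y i) U) (halt : ∀ y ∈ U, IsAlt (A y)) (hx : x ∈ U)
    (v : EuclideanSpace ℝ (Fin n)) : IsAlt fun i => pd (fun y => A y i) v x := by
  intro i σ
  beta_reduce
  rw [pd_congr_on hU (fun y hy => halt y hy i σ) hx, pd_const_mul (dAt_of_contDiffOn hU (hA i) hx)]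

lemma extDer_isAlt (hU : IsOpen U) {A : EuclideanSpace ℝ (Fin n) → (Fin k → Fin n) → ℝ}
    (hA : ∀ i, ContDiffOn ℝ (⊤ : ℕ∞) (fun y => A y i) U) (halt : ∀ y ∈ U, IsAlt (A y)) (hx : x ∈ U) :
    IsAlt (extDer n k A x) :=
  altSum_isAlt fun a => pd_isAlt hU hA halt hx (EuclideanSpace.single a 1)

lemma divg_isAlt (hU : IsOpen U) {A : EuclideanSpace ℝ (Fin n) → (Fin (k + 1) → Fin n) → ℝ}
    (hA : ∀ i, ContDiffOn ℝ (⊤ : ℕ∞) (fun y => A y i) U) (halt : ∀ y ∈ U, IsAlt (A y)) (hx : x ∈ U) :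
    IsAlt (divg n k A x) :=
  IsAlt.sum fun a => (pd_isAlt hU hA halt hx (EuclideanSpace.single a 1)).cons a

lemma extDer_extDer (hU : IsOpen U) {A : EuclideanSpace ℝ (Fin n) → (Fin k → Fin n) → ℝ}
    (hA : ∀ i, ContDiffOn ℝ (⊤ : ℕ∞) (fun y => A y i) U) (halt : ∀ y ∈ U, IsAlt (A y)) (hx : x ∈ U)
    (j : Fin (k + 2) → Fin n) : extDer n (k + 1) (extDer n k A) x j = 0 := by
  rw [← altSum_altSum (T := fun a b l => pd (pd (fun y => A y l) (EuclideanSpace.single b 1))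
    (EuclideanSpace.single a 1) x) ?_ ?_ j]
  · exact Finset.sum_congr rfl fun m _ => by rw [pd_extDer hU hA hx]
  · exact fun a b => pd_isAlt (A := fun y l => pd (fun y => A y l) (EuclideanSpace.single b 1) y) hU
      (fun i => pd_contDiffOn hU (hA i) _) (fun y hy => pd_isAlt hU hA halt hy _) hx _
  · exact fun a b => funext fun l => pd_comm hU (hA l) _ _ hx

lemma divg_divg (hU : IsOpen U) {A : EuclideanSpace ℝ (Fin n) → (Fin (k + 2) → Fin n) → ℝ}
    (hA : ∀ i, ContDiffOn ℝ (⊤ : ℕ∞) (fun y => A y i) U) (halt : ∀ y ∈ U, IsAlt (A y)) (hx : x ∈ U)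
    (i : Fin k → Fin n) : divg n k (divg n (k + 1) A) x i = 0 := by
  have h1 : divg n k (divg n (k + 1) A) x i = ∑ b, ∑ a,
      pd (pd (fun y => A y (Fin.cons a (Fin.cons b i))) (EuclideanSpace.single a 1))
        (EuclideanSpace.single b 1) x :=
    Finset.sum_congr rfl fun b _ => pd_divg hU hA hx _ _
  -- exchanging the names of the two summation indices changes the sign
  have h2 : divg n k (divg n (k + 1) A) x i = -divg n k (divg n (k + 1) A) x i := by
    conv_lhs => rw [h1, Finset.sum_comm]
    rw [h1, ← Finset.sum_neg_distrib]
    refine Finset.sum_congr rfl fun a _ => ?_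
    rw [← Finset.sum_neg_distrib]
    refine Finset.sum_congr rfl fun b _ => ?_
    rw [pd_comm hU (hA _) _ _ hx]
    exact (pd_isAlt (A := fun y l => pd (fun y => A y l) (EuclideanSpace.single b 1) y) hU
      (fun i => pd_contDiffOn hU (hA i) _) (fun y hy => pd_isAlt hU hA halt hy _) hx _).cons_cons _ _ _
  linarith

/-- The Weitzenböck identity `δd + dδ = Δ` in flat space, component by component. -/
lemma divg_extDer_add_extDer_divg (hU : IsOpen U)
    {A : EuclideanSpace ℝ (Fin n) → (Fin (k + 1) → Fin n) → ℝ}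
    (hA : ∀ i, ContDiffOn ℝ (⊤ : ℕ∞) (fun y => A y i) U) (hx : x ∈ U) (i : Fin (k + 1) → Fin n) :
    divg n (k + 1) (extDer n (k + 1) A) x i + extDer n k (divg n k A) x i =
      lap (fun y => A y i) x := by
  have h1 : divg n (k + 1) (extDer n (k + 1) A) x i = lap (fun y => A y i) x -
      ∑ a, ∑ p : Fin (k + 1), (-1 : ℝ) ^ (p : ℕ) *
        pd (pd (fun y => A y (Fin.cons a (i ∘ p.succAbove))) (EuclideanSpace.single (i p) 1))
          (EuclideanSpace.single a 1) x := by
    unfold lap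
    rw [← Finset.sum_sub_distrib]
    refine Finset.sum_congr rfl fun a _ => ?_
    rw [pd_extDer hU hA hx, altSum_cons]
  have h2 : extDer n k (divg n k A) x i = ∑ p : Fin (k + 1), ∑ a, (-1 : ℝ) ^ (p : ℕ) *
        pd (pd (fun y => A y (Fin.cons a (i ∘ p.succAbove))) (EuclideanSpace.single (i p) 1))
          (EuclideanSpace.single a 1) x := by
    refine Finset.sum_congr rfl fun p _ => ?_
    rw [pd_divg hU hA hx, Finset.mul_sum]
    exact Finset.sum_congr rfl fun a _ => by rw [pd_comm hU (hA _) _ _ hx]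
  rw [h1, h2, Finset.sum_comm]
  ring

lemma rad_isAlt (N : ℕ) {c : EuclideanSpace ℝ (Fin n)} (hstar : StarConvex ℝ c U)
    {F : EuclideanSpace ℝ (Fin n) → (Fin k → Fin n) → ℝ} (halt : ∀ y ∈ U, IsAlt (F y))
    (hx : x ∈ U) : IsAlt fun i => rad N c (fun y => F y i) x := by
  intro i σ
  have h : rad N c (fun y => F y (i ∘ σ)) x =
      rad N c (fun y => ((Equiv.Perm.sign σ : ℤ) : ℝ) * F y i) x :=
    rad_congr fun t ht => halt _ (hstar.add_smul_sub_mem hx ht.1 ht.2) i σ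
  beta_reduce
  rw [h]
  unfold rad
  rw [← intervalIntegral.integral_const_mul]
  congr 1
  ext t
  ring

lemma rad_sum (N : ℕ) {c : EuclideanSpace ℝ (Fin n)} (hstar : StarConvex ℝ c U) {ι : Type*}
    (s : Finset ι) {f : ι → EuclideanSpace ℝ (Fin n) → ℝ} (hf : ∀ a, ContinuousOn (f a) U)
    (hx : x ∈ U) : rad N c (fun y => ∑ a ∈ s, f a y) x = ∑ a ∈ s, rad N c (f a) x := by
  unfold rad
  simp only [Finset.mul_sum]
  refine intervalIntegral.integral_finsetSum fun a _ => ContinuousOn.intervalIntegrable ?_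
  rw [uIcc_of_le zero_le_one]
  refine (by fun_prop : Continuous fun t : ℝ => t ^ N).continuousOn.mul ?_
  exact (hf a).comp (by fun_prop : Continuous fun t : ℝ => c + t • (x - c)).continuousOn
    fun t ht => hstar.add_smul_sub_mem hx ht.1 ht.2

lemma pd_coord (c v : EuclideanSpace ℝ (Fin n)) (a : Fin n) :
    pd (fun y : EuclideanSpace ℝ (Fin n) => (y - c) a) v x = v a := by
  have h : HasFDerivAt (fun y : EuclideanSpace ℝ (Fin n) => (y - c) a)
      (EuclideanSpace.proj a : EuclideanSpace ℝ (Fin n) →L[ℝ] ℝ) x :=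
    (EuclideanSpace.proj (𝕜 := ℝ) a).hasFDerivAt.comp x ((hasFDerivAt_id x).sub_const c)
  unfold pd
  rw [h.fderiv]
  rfl

/-- The dual Poincaré lemma: the homotopy formula
`B(x) = (x - c) ∧ ∫₀¹ t ^ (n - m - 2) F(c + t (x - c)) dt` gives `δB = F`. -/
lemma dual_poincare {m : ℕ} (hk : m + 2 ≤ n) (hU : IsOpen U)
    {c : EuclideanSpace ℝ (Fin n)} (hstar : StarConvex ℝ c U)
    {F : EuclideanSpace ℝ (Fin n) → (Fin (m + 1) → Fin n) → ℝ}
    (hF : ∀ i, ContDiffOn ℝ (⊤ : ℕ∞) (fun y => F y i) U) (halt : ∀ y ∈ U, IsAlt (F y))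
    (hdiv : ∀ x ∈ U, ∀ i : Fin m → Fin n, divg n m F x i = 0) :
    ∃ B : EuclideanSpace ℝ (Fin n) → (Fin (m + 2) → Fin n) → ℝ,
      (∀ j, ContDiffOn ℝ (⊤ : ℕ∞) (fun y => B y j) U) ∧ (∀ y ∈ U, IsAlt (B y)) ∧
      ∀ x ∈ U, ∀ i, divg n (m + 1) B x i = F x i := by
  obtain ⟨N, rfl⟩ := Nat.exists_eq_add_of_le hk
  let G : EuclideanSpace ℝ (Fin (m + 2 + N)) → (Fin (m + 1) → Fin (m + 2 + N)) → ℝ :=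
    fun x i => rad N c (fun y => F y i) x
  have hG : ∀ i, ContDiffOn ℝ (⊤ : ℕ∞) (fun y => G y i) U :=
    fun i => rad_contDiffOn N hU hstar (hF i)
  have hGalt : ∀ y ∈ U, IsAlt (G y) := fun y hy => rad_isAlt N hstar halt hy
  have hGdiv : ∀ x ∈ U, ∀ i : Fin m → Fin (m + 2 + N),
      ∑ a, pd (fun y => G y (Fin.cons a i)) (EuclideanSpace.single a 1) x = 0 := by
    intro x hx i
    rw [Finset.sum_congr rfl fun a _ => pd_rad N hU hstar (hF (Fin.cons a i)) _ hx,
      ← rad_sum (N + 1) hstar _ (fun a => (pd_contDiffOn hU (hF _) _).continuousOn) hx,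
      rad_congr (g := fun _ => 0) fun t ht => hdiv _ (hstar.add_smul_sub_mem hx ht.1 ht.2) i]
    simp [rad]
  have hc : ∀ a, ContDiff ℝ (⊤ : ℕ∞) fun y : EuclideanSpace ℝ (Fin (m + 2 + N)) => (y - c) a :=
    fun a => by fun_prop
  refine ⟨fun x => altSum fun a i => (x - c) a * G x i, fun j => ?_, fun y hy => ?_,
    fun x hx i => ?_⟩
  · unfold altSum
    exact ContDiffOn.sum fun p _ => contDiffOn_const.mul ((hc _).contDiffOn.mul (hG _))
  · exact altSum_isAlt fun a => (hGalt y hy).smul _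
  have hGd : ∀ i, DifferentiableAt ℝ (fun y => G y i) x := fun i => dAt_of_contDiffOn hU (hG i) hx
  have hprod : ∀ a b l, pd (fun y => (y - c) b * G y l) (EuclideanSpace.single a 1) x =
      (if b = a then 1 else 0) * G x l +
        (x - c) b * pd (fun y => G y l) (EuclideanSpace.single a 1) x := by
    intro a b l
    rw [pd_mul ((hc b).dAt x) (hGd l), pd_coord]
    simp
  have hpd : ∀ a, pd (fun y => altSum (fun a i => (y - c) a * G y i) (Fin.cons a i))
      (EuclideanSpace.single a 1) x =
      G x i + (x - c) a * pd (fun y => G y i) (EuclideanSpace.single a 1) x -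
      ∑ p : Fin (m + 1), (-1 : ℝ) ^ (p : ℕ) *
        ((if i p = a then 1 else 0) * G x (Fin.cons a (i ∘ p.succAbove)) + (x - c) (i p) *
          pd (fun y => G y (Fin.cons a (i ∘ p.succAbove))) (EuclideanSpace.single a 1) x) := by
    intro a
    have hd : ∀ b l, DifferentiableAt ℝ (fun y => (y - c) b * G y l) x :=
      fun b l => ((hc b).dAt x).mul (hGd l)
    simp only [altSum_cons]
    rw [pd_sub (hd _ _) (DifferentiableAt.fun_sum fun p _ => (hd _ _).const_mul _),
      pd_sum fun p _ => (hd _ _).const_mul _, hprod, if_pos rfl, one_mul]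
    congr 1
    exact Finset.sum_congr rfl fun p _ => by rw [pd_const_mul (hd _ _), hprod]
  have hp : ∀ p : Fin (m + 1), ∑ a, (-1 : ℝ) ^ (p : ℕ) *
        ((if i p = a then 1 else 0) * G x (Fin.cons a (i ∘ p.succAbove)) + (x - c) (i p) *
          pd (fun y => G y (Fin.cons a (i ∘ p.succAbove))) (EuclideanSpace.single a 1) x) =
      G x i := by
    intro p
    rw [← Finset.mul_sum, Finset.sum_add_distrib, ← Finset.mul_sum, hGdiv x hx, mul_zero, add_zero]
    simp only [ite_mul, one_mul, zero_mul, Finset.sum_ite_eq, Finset.mem_univ, if_true]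
    exact (hGalt x hx).cons_succAbove i p
  have hE := rad_euler N hU hstar (hF i) hx
  unfold divg
  rw [Finset.sum_congr rfl fun a _ => hpd a, Finset.sum_sub_distrib, Finset.sum_comm,
    Finset.sum_congr rfl fun p _ => hp p, Finset.sum_add_distrib]
  simp only [Finset.sum_const, Finset.card_univ, Fintype.card_fin, nsmul_eq_mul]
  rw [← hE]
  push_cast
  change (m + 2 + N : ℝ) * G x i + ∑ a, (x - c) a * pd (fun y => G y i) _ x - (m + 1) * G x i =
    (N + 1) * G x i + ∑ a, (x - c) a * pd (fun y => G y i) _ x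
  ring

/-- An antisymmetric field on `U` is the Laplacian of an antisymmetric field. -/
lemma poisson_isAlt (hn : 3 ≤ n) (hU : IsOpen U) {c : EuclideanSpace ℝ (Fin n)} (hc : c ∈ U)
    (hstar : StarConvex ℝ c U) {B : EuclideanSpace ℝ (Fin n) → (Fin k → Fin n) → ℝ}
    (hB : ∀ i, ContDiffOn ℝ (⊤ : ℕ∞) (fun y => B y i) U) (halt : ∀ y ∈ U, IsAlt (B y)) :
    ∃ A : EuclideanSpace ℝ (Fin n) → (Fin k → Fin n) → ℝ,
      (∀ i, ContDiffOn ℝ (⊤ : ℕ∞) (fun y => A y i) U) ∧ (∀ y ∈ U, IsAlt (A y)) ∧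
      ∀ x ∈ U, ∀ i, lap (fun y => A y i) x = B x i := by
  choose u hu hlap using fun i => poisson hn hU hc hstar (hB i)
  refine ⟨fun y => antisymmetrize fun i => u i y, fun i => ?_, fun y _ => antisymmetrize_isAlt _,
    fun x hx i => ?_⟩
  · unfold antisymmetrize
    exact ContDiffOn.sum fun σ _ => contDiffOn_const.mul (hu _)
  have h1 : ∀ v, ∀ y ∈ U, pd (fun y => antisymmetrize (fun i => u i y) i) v y =
      antisymmetrize (fun i => pd (u i) v y) i := by
    intro v y hy
    unfold antisymmetrize
    rw [pd_sum fun σ _ => (dAt_of_contDiffOn hU (hu _) hy).const_mul _]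
    exact Finset.sum_congr rfl fun σ _ => pd_const_mul (dAt_of_contDiffOn hU (hu _) hy) _ _
  have h2 : ∀ v, pd (pd (fun y => antisymmetrize (fun i => u i y) i) v) v x =
      antisymmetrize (fun i => pd (pd (u i) v) v x) i := by
    intro v
    rw [pd_congr_on hU (h1 v) hx]
    have hd : ∀ i, DifferentiableAt ℝ (pd (u i) v) x :=
      fun i => dAt_of_contDiffOn hU (pd_contDiffOn hU (hu i) v) hx
    unfold antisymmetrize
    rw [pd_sum fun σ _ => (hd _).const_mul _]
    exact Finset.sum_congr rfl fun σ _ => pd_const_mul (hd _) _ _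
  have h3 : lap (fun y => antisymmetrize (fun i => u i y) i) x =
      antisymmetrize (fun i => lap (u i) x) i := by
    unfold lap
    rw [Finset.sum_congr rfl fun a _ => h2 _]
    unfold antisymmetrize
    rw [Finset.sum_comm]
    simp only [Finset.mul_sum]
  rw [h3]
  simp only [hlap _ x hx]
  rw [antisymmetrize_of_isAlt (halt x hx)]

end TensorCalculus

/-! ### The closed potential -/

/-- **Strong dual Poincaré lemma** (here `k = m + 1` with `1 ≤ k ≤ n − 1`). On an open
star-shaped subset `U` of `ℝⁿ`, every smooth divergence-free antisymmetric `k`-tensor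
field has a smooth closed potential: `F = δB` with `dB = 0`. -/
theorem strong_dual_poincare_lemma (n m : ℕ) (hk : m + 2 ≤ n)
    (U : Set (EuclideanSpace ℝ (Fin n))) (hU : IsOpen U)
    (c : EuclideanSpace ℝ (Fin n)) (hc : c ∈ U) (hstar : StarConvex ℝ c U)
    (F : EuclideanSpace ℝ (Fin n) → (Fin (m + 1) → Fin n) → ℝ)
    (hF : ContDiffOn ℝ (⊤ : ℕ∞) F U)
    (hanti : IsAntisymmOn n (m + 1) U F)
    (hdivfree : ∀ x ∈ U, ∀ i : Fin m → Fin n, divg n m F x i = 0) :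
    ∃ B : EuclideanSpace ℝ (Fin n) → (Fin (m + 2) → Fin n) → ℝ, ContDiffOn ℝ (⊤ : ℕ∞) B U ∧
      IsAntisymmOn n (m + 2) U B ∧
      (∀ x ∈ U, ∀ i : Fin (m + 1) → Fin n, F x i = divg n (m + 1) B x i) ∧
      (∀ x ∈ U, ∀ j : Fin (m + 3) → Fin n, extDer n (m + 2) B x j = 0) := by
  obtain ⟨B₀, hB₀, hB₀alt, hB₀div⟩ :=
    dual_poincare hk hU hstar (contDiffOn_pi.1 hF) hanti hdivfree
  rcases hk.eq_or_lt with hn | hn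
  · refine ⟨B₀, contDiffOn_pi.2 hB₀, hB₀alt, fun x hx i => (hB₀div x hx i).symm,
      fun x hx j => ?_⟩
    -- among `n + 1` indices two coincide
    obtain ⟨a, b, hab, hj⟩ := Fintype.exists_ne_map_eq_of_card_lt j (by simp; omega)
    exact (extDer_isAlt hU hB₀ hB₀alt hx).eq_zero hab hj
  · obtain ⟨A, hA, hAalt, hAlap⟩ := poisson_isAlt (by omega) hU hc hstar hB₀ hB₀alt
    have hdA := extDer_contDiffOn hU hA
    have hδA := divg_contDiffOn hU hA
    have hδAalt : ∀ y ∈ U, IsAlt (divg n (m + 1) A y) := fun y hy => divg_isAlt hU hA hAalt hy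
    refine ⟨extDer n (m + 1) (divg n (m + 1) A), contDiffOn_pi.2 (extDer_contDiffOn hU hδA),
      fun x hx => extDer_isAlt hU hδA hδAalt hx, fun x hx i => ?_,
      fun x hx j => extDer_extDer hU hδA hδAalt hx j⟩
    -- `δdδA = δ(ΔA) - δδdA = δB₀ = F`
    have hdd := divg_divg hU hdA (fun y hy => extDer_isAlt hU hA hAalt hy) hx i
    have h : ∀ y ∈ U, ∀ j, B₀ y j = divg n (m + 2) (extDer n (m + 2) A) y j +
        extDer n (m + 1) (divg n (m + 1) A) y j := fun y hy j => by
      rw [divg_extDer_add_extDer_divg hU hA hy, hAlap y hy]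
    rw [← hB₀div x hx i, ← zero_add (divg n (m + 1) (extDer _ _ _) x i), ← hdd]
    unfold divg at hdd ⊢
    rw [← Finset.sum_add_distrib]
    refine Finset.sum_congr rfl fun a _ => ?_
    rw [pd_congr_on hU (fun y hy => h y hy _) hx]
    exact pd_add (dAt_of_contDiffOn hU (divg_contDiffOn hU hdA _) hx)
      (dAt_of_contDiffOn hU (extDer_contDiffOn hU hδA _) hx) _
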